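/- arXiv:2201.03880 — 2 statements merged into one kernel-verified Lean document; each statement's English description precedes it below -/
import Mathlib

section
/- For every positive integer k, if G is a graph of treewidth less than k that has a path of order n, then G has an induced path of order at least (1/4)·(log₂ n)^(1/k). -/
open SimpleGraph Real

/-- `G` has a (not necessarily induced) path on `n` vertices. -/
def HasPathOfOrder {V : Type*} (G : SimpleGraph V) (n : ℕ) : Prop :=
  ∃ (u v : V) (p : G.Walk u v), p.IsPath ∧ p.length + 1 = n

/-- `G` has a Hamiltonian path. -/
def HasHamPath {V : Type*} (G : SimpleGraph V) : Prop :=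
  ∃ (u v : V) (p : G.Walk u v), p.IsPath ∧ ∀ w, w ∈ p.support

/-- `G` has an induced path on at least `r` vertices (an induced subgraph isomorphic to a
path graph on `m ≥ r` vertices). -/
def HasInducedPathGE {V : Type*} (G : SimpleGraph V) (r : ℝ) : Prop :=
  ∃ m : ℕ, r ≤ (m : ℝ) ∧ Nonempty (pathGraph m ↪g G)

/-- A tree (or path) representation of `G` over the graph `T`: every vertex `v` of `G` has a
nonempty connected model `model v ⊆ V(T)`, and models of adjacent vertices intersect. -/
structure TreeRep {V N : Type*} (G : SimpleGraph V) (T : SimpleGraph N) where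
  model : V → Set N
  model_connected : ∀ v, (T.induce (model v)).Connected
  adj_meet : ∀ ⦃u v⦄, G.Adj u v → (model u ∩ model v).Nonempty

namespace TreeRep

variable {V N : Type*} {G : SimpleGraph V} {T : SimpleGraph N}

/-- The bag of the representation at a node `t`. -/
def bag (R : TreeRep G T) (t : N) : Set V := {v | t ∈ R.model v}

/-- The representation has width less than `k`, i.e. all bags have at most `k` vertices. -/
def WidthLT (R : TreeRep G T) (k : ℕ) : Prop := ∀ t, (R.bag t).ncard ≤ k

/-- The representation has width at most `k`, i.e. all bags have at most `k + 1` vertices. -/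
def WidthLE (R : TreeRep G T) (k : ℕ) : Prop := ∀ t, (R.bag t).ncard ≤ k + 1

/-- The weight of a path `p` of `T`: the number of vertices of `G` whose model meets `p`. -/
noncomputable def pathWeight (R : TreeRep G T) {x y : N} (p : T.Walk x y) : ℕ :=
  {v : V | ∃ t ∈ p.support, t ∈ R.model v}.ncard

/-- A representation is varied if no bag is contained in the bag at a neighboring node. -/
def Varied (R : TreeRep G T) : Prop := ∀ ⦃t t'⦄, T.Adj t t' → ¬ R.bag t ⊆ R.bag t'

/-- The representation has adhesion less than `a`: the adhesion set of every edge of `T`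
has fewer than `a` vertices. -/
def AdhesionLT (R : TreeRep G T) (a : ℕ) : Prop :=
  ∀ ⦃t t'⦄, T.Adj t t' → (R.bag t ∩ R.bag t').ncard < a

/-- The torso of the representation at a node `t`: the subgraph induced on the bag at `t`
together with all edges inside adhesion sets of edges of `T` incident to `t`. -/
def torso (R : TreeRep G T) (t : N) : SimpleGraph (R.bag t) :=
  SimpleGraph.fromRel (fun u v =>
    G.Adj u v ∨ ∃ t', T.Adj t t' ∧ (u : V) ∈ R.bag t' ∧ (v : V) ∈ R.bag t')

end TreeRep

/-- `G` has pathwidth less than `k`: it has a representation over a path all of whose bags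
have at most `k` vertices. -/
def PathwidthLT {V : Type*} (G : SimpleGraph V) (k : ℕ) : Prop :=
  ∃ (m : ℕ) (R : TreeRep G (pathGraph (m + 1))), R.WidthLT k

/-- `G` has treewidth less than `k`: it has a representation over a tree all of whose bags
have at most `k` vertices. -/
def TreewidthLT {V : Type*} (G : SimpleGraph V) (k : ℕ) : Prop :=
  ∃ (N : Type) (_ : Fintype N) (T : SimpleGraph N), T.IsTree ∧
    ∃ R : TreeRep G T, R.WidthLT k

/-- `G` has treewidth at most `k`. -/
def TreewidthLE {V : Type*} (G : SimpleGraph V) (k : ℕ) : Prop :=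
  ∃ (N : Type) (_ : Fintype N) (T : SimpleGraph N), T.IsTree ∧
    ∃ R : TreeRep G T, R.WidthLE k

/-- A leaf of a graph: a vertex with at most one neighbor. -/
def IsLeafNode {N : Type*} (T : SimpleGraph N) (l : N) : Prop :=
  (T.neighborSet l).Subsingleton

/-- `H` is obtained from `G` by a sequence of edge contractions: there is a surjection
from `V(G)` onto `V(H)` with connected fibers inducing the adjacency of `H`. -/
def IsContraction {W V : Type*} (H : SimpleGraph W) (G : SimpleGraph V) : Prop :=
  ∃ f : V → W, Function.Surjective f ∧
    (∀ w : W, (G.induce (f ⁻¹' {w})).Connected) ∧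
    (∀ x y : W, H.Adj x y ↔ x ≠ y ∧ ∃ u v : V, f u = x ∧ f v = y ∧ G.Adj u v)

/-- `G` is an interval graph: the intersection graph of a family of real intervals. -/
def IsIntervalGraph {V : Type*} (G : SimpleGraph V) : Prop :=
  ∃ l r : V → ℝ, (∀ v, l v ≤ r v) ∧
    ∀ u v : V, G.Adj u v ↔ u ≠ v ∧ max (l u) (l v) ≤ min (r u) (r v)

/-- The internal vertices of a walk: vertices of the walk distinct from its two endpoints. -/
def WalkInternal {V : Type*} {G : SimpleGraph V} {x y : V} (p : G.Walk x y) : Set V :=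
  {w | w ∈ p.support ∧ w ≠ x ∧ w ≠ y}

/-- `H` is a topological minor of `G`: there are branch vertices `φ u` for `u ∈ V(H)` and
internally disjoint paths of `G` joining them, one for each edge of `H`. -/
def IsTopMinor {W V : Type*} (H : SimpleGraph W) (G : SimpleGraph V) : Prop :=
  ∃ (φ : W ↪ V) (P : ∀ ⦃u v : W⦄, H.Adj u v → G.Walk (φ u) (φ v)),
    (∀ ⦃u v⦄ (h : H.Adj u v), (P h).IsPath) ∧
    (∀ ⦃u v⦄ (h : H.Adj u v), P h.symm = (P h).reverse) ∧
    (∀ ⦃u v⦄ (h : H.Adj u v), ∀ w ∈ WalkInternal (P h), w ∉ Set.range φ) ∧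
    (∀ ⦃u v u' v'⦄ (h : H.Adj u v) (h' : H.Adj u' v'), s(u, v) ≠ s(u', v') →
      ∀ w ∈ WalkInternal (P h), w ∉ WalkInternal (P h'))

/-- `H` is (an isomorphic copy of) a subgraph of `G`. -/
def ContainsSubgraphCopy {A B : Type*} (H : SimpleGraph A) (G : SimpleGraph B) : Prop :=
  ∃ f : A ↪ B, ∀ u v : A, H.Adj u v → G.Adj (f u) (f v)

/-- `G` is `k`-degenerate: every (induced) subgraph has a vertex of degree at most `k`. -/
def Degenerate {V : Type*} (G : SimpleGraph V) (k : ℕ) : Prop :=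
  ∀ s : Set V, s.Nonempty → ∃ v ∈ s, {w | w ∈ s ∧ G.Adj v w}.ncard ≤ k

/-- The cycle on `ZMod m` (for `m ≥ 3` this is the cycle graph on `m` vertices). -/
def ringGraph (m : ℕ) : SimpleGraph (ZMod m) :=
  SimpleGraph.fromRel (fun i j => j = i + 1)

/-- Cliquewidth expressions with labels in `Fin k`. -/
inductive CWExpr (k : ℕ) where
  | vertex (l : Fin k) : CWExpr k
  | union (e₁ e₂ : CWExpr k) : CWExpr k
  | addEdges (i j : Fin k) (hij : i ≠ j) (e : CWExpr k) : CWExpr k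
  | relabel (f : Fin k → Fin k) (e : CWExpr k) : CWExpr k

namespace CWExpr

variable {k : ℕ}

/-- The vertex set of the graph described by a cliquewidth expression. -/
def verts : CWExpr k → Type
  | vertex _ => Unit
  | union e₁ e₂ => e₁.verts ⊕ e₂.verts
  | addEdges _ _ _ e => e.verts
  | relabel _ e => e.verts

/-- The labelling of the vertices described by a cliquewidth expression. -/
def label : (e : CWExpr k) → e.verts → Fin k
  | vertex l, _ => l
  | union e₁ _, Sum.inl x => e₁.label x
  | union _ e₂, Sum.inr x => e₂.label x
  | addEdges _ _ _ e, x => e.label x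
  | relabel f e, x => f (e.label x)

/-- The adjacency relation described by a cliquewidth expression. -/
def adj : (e : CWExpr k) → e.verts → e.verts → Prop
  | vertex _, _, _ => False
  | union e₁ _, Sum.inl x, Sum.inl y => e₁.adj x y
  | union _ e₂, Sum.inr x, Sum.inr y => e₂.adj x y
  | union _ _, _, _ => False
  | addEdges i j _ e, x, y =>
      e.adj x y ∨ (e.label x = i ∧ e.label y = j) ∨ (e.label x = j ∧ e.label y = i)
  | relabel _ e, x, y => e.adj x y

/-- The graph described by a cliquewidth expression. -/
def graph (e : CWExpr k) : SimpleGraph e.verts := SimpleGraph.fromRel e.adj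

end CWExpr

/-- `G` has cliquewidth at most `k`: it is isomorphic to the graph of a cliquewidth
expression with at most `k` labels. -/
def CliquewidthLE {V : Type*} (G : SimpleGraph V) (k : ℕ) : Prop :=
  ∃ e : CWExpr k, Nonempty (G ≃g e.graph)

/-- `G` has `(k, Δ)`-almost bounded degree: removing at most `k` vertices yields a graph of
maximum degree at most `Δ`. -/
def AlmostBoundedDegree {V : Type*} (G : SimpleGraph V) (k Δ : ℕ) : Prop :=
  ∃ X : Set V, X.ncard ≤ k ∧ ∀ v ∉ X, {w | w ∉ X ∧ G.Adj v w}.ncard ≤ Δ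

/-- An embedding scheme for `H`: a rotation system (a permutation of the darts that is,
around each vertex, a single cycle on the darts leaving that vertex) together with a
signature on the edges. -/
structure EmbScheme {W : Type*} (H : SimpleGraph W) where
  rot : Equiv.Perm H.Dart
  rot_fst : ∀ d : H.Dart, (rot d).fst = d.fst
  rot_cyclic : ∀ d d' : H.Dart, d.fst = d'.fst → ∃ n : ℕ, (rot ^ n) d = d'
  sign : Sym2 W → Bool

namespace EmbScheme

variable {W : Type*} {H : SimpleGraph W}

/-- The face-tracing step of an embedding scheme, acting on darts with a direction. -/
def faceStep (S : EmbScheme H) : H.Dart × Bool → H.Dart × Bool :=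
  fun p =>
    let s' := xor p.2 (S.sign p.1.edge)
    ((if s' then S.rot.symm p.1.symm else S.rot p.1.symm), s')

/-- The number of orbits of a function. -/
noncomputable def orbitCount {α : Type*} (f : α → α) : ℕ :=
  Nat.card (Quotient (Relation.EqvGen.setoid (fun x y => f x = y)))

/-- The scheme describes an embedding of `H` in a surface of Euler genus at most `g`.
Isolated vertices each bound one face; every other face is traced twice by `faceStep`,
so the number of faces is `orbitCount (faceStep) / 2` plus the number of isolated
vertices, and the Euler genus of the embedding is `2c - |V| + |E| - F`. -/
def GenusLE (S : EmbScheme H) (g : ℕ) : Prop :=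
  2 * Nat.card H.ConnectedComponent + Nat.card H.edgeSet ≤
    g + Nat.card W +
      (orbitCount S.faceStep / 2 + Nat.card {v : W | ∀ w, ¬ H.Adj v w})

/-- The cycle `e 0, e 1, …, e (m-1)` is a facial cycle of the embedding scheme `S`:
its consecutive darts are consecutive in a face traversal. -/
def IsFacialCycle (S : EmbScheme H) {m : ℕ} (e : ZMod m → W)
    (hadj : ∀ x : ZMod m, H.Adj (e x) (e (x + 1))) : Prop :=
  ∃ b : ZMod m → Bool, ∀ x : ZMod m,
    S.faceStep (⟨(e x, e (x + 1)), hadj x⟩, b x) =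
      (⟨(e (x + 1), e (x + 1 + 1)), hadj (x + 1)⟩, b (x + 1))

end EmbScheme

/-- `Hs` has a `C`-vortex of width less than `k`, where `C` is the cycle of `G₀` given by
`e`: the vertices common to `Hs` and `G₀` are exactly those of `C`, and `Hs` has a cycle
representation over `C` in which the model of each vertex of `C` contains that vertex and
every bag has at most `k` vertices. -/
def IsVortex {V : Type*} {G : SimpleGraph V} (Hs G₀ : G.Subgraph) {m : ℕ}
    (e : ZMod m → G₀.verts) (k : ℕ) : Prop :=
  Hs.verts ∩ G₀.verts = Subtype.val '' Set.range e ∧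
  ∃ model : Hs.verts → Set (ZMod m),
    (∀ v, ((ringGraph m).induce (model v)).Connected) ∧
    (∀ (x : ZMod m) (v : Hs.verts), (e x : V) = (v : V) → x ∈ model v) ∧
    (∀ ⦃u v⦄, Hs.coe.Adj u v → (model u ∩ model v).Nonempty) ∧
    (∀ t : ZMod m, {v : Hs.verts | t ∈ model v}.ncard ≤ k)

/-- `G` is `(g, p, a, k)`-almost-embeddable. -/
def AlmostEmbeddable {V : Type*} (G : SimpleGraph V) (g p a k : ℕ) : Prop :=
  ∃ A : Set V, A.ncard ≤ a ∧
  ∃ s : ℕ, s ≤ p ∧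
  ∃ (G₀ : G.Subgraph) (Gv : Fin s → G.Subgraph),
    (G₀ ⊔ ⨆ i, Gv i) = (⊤ : G.Subgraph).deleteVerts A ∧
    (∀ i j, i ≠ j → Disjoint (Gv i).verts (Gv j).verts) ∧
    ∃ S : EmbScheme G₀.coe, S.GenusLE g ∧
    ∃ (m : Fin s → ℕ) (e : ∀ i, ZMod (m i) → G₀.verts)
      (hadj : ∀ i x, G₀.coe.Adj (e i x) (e i (x + 1))),
      (∀ i, 3 ≤ m i) ∧
      (∀ i, Function.Injective (e i)) ∧
      (∀ i, S.IsFacialCycle (e i) (hadj i)) ∧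
      (∀ i j, i ≠ j → Disjoint (Set.range (e i)) (Set.range (e j))) ∧
      (∀ i, IsVortex (Gv i) G₀ (e i) k)

/-!
Call a list of tree nodes monotone if each entry lies between all earlier and all later ones. Let
`s` exceed the order of every induced path of `G`, and let `L` be a path of `G`.

* Some monotone list `P` of tree nodes meets the models of more than `log₂ |L|` vertices of `L`.
  Starting from any node `r`, enter the subtree spanned by `L` at its node `t` nearest to `r`. The
  vertices in the bag of `t` cut `L` into pieces; recurse from `t` into the best of them.
* A monotone list `P` meets the models of fewer than `s ^ k` vertices of `L` if every bag on `P` has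
  at most `k` vertices in `L`. Take the first and the last node of `P` met by the models of `L`, and
  a shortest path `Q` of `G[L]` joining a vertex in the bag of one to a vertex in the bag of the
  other. It is induced, and its models cover every node of `P` met by `L`, as their union is
  connected. So deleting the fewer than `s` vertices of `Q` cuts `L` into at most `s` pieces, each
  with at most `k - 1` vertices in every bag on `P`.

Together these give `|L| < 2 ^ s ^ k`.
-/

section Lists

variable {α : Type*}

theorem exists_infix_countP_lt_mul (d p : α → Bool) (L : List α) :
    ∃ L', L' <:+: L ∧ (∀ x ∈ L', ¬ d x) ∧
      L.countP p < (L.countP d + 1) * (L'.countP p + 1) := by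
  by_cases h : ∃ x ∈ L, d x
  · obtain ⟨x, hx, hdx⟩ := h
    obtain ⟨A, B, rfl⟩ := List.append_of_mem hx
    obtain ⟨A', hA', hdA, hA⟩ := exists_infix_countP_lt_mul d p A
    obtain ⟨B', hB', hdB, hB⟩ := exists_infix_countP_lt_mul d p B
    have hlt : ∀ m, A'.countP p ≤ m → B'.countP p ≤ m →
        (A ++ x :: B).countP p < ((A ++ x :: B).countP d + 1) * (m + 1) := by
      intro m hAm hBm
      have hpx : (if p x then 1 else 0) ≤ 1 := by split <;> omega
      simp only [List.countP_append, List.countP_cons, hdx, if_true]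
      nlinarith [Nat.mul_le_mul_left (A.countP d + 1) hAm,
        Nat.mul_le_mul_left (B.countP d + 1) hBm]
    rcases le_total (A'.countP p) (B'.countP p) with hle | hle
    · exact ⟨B', hB'.trans ⟨A ++ [x], [], by simp⟩, hdB, hlt _ hle le_rfl⟩
    · exact ⟨A', hA'.trans ⟨[], x :: B, by simp⟩, hdA, hlt _ le_rfl hle⟩
  · push Not at h
    refine ⟨L, List.infix_refl L, by simpa using h, ?_⟩
    nlinarith [Nat.zero_le (L.countP d * (L.countP p + 1))]
termination_by L.length
decreasing_by all_goals grind

theorem countP_add_countP_le_of_sublist {p q r : α → Bool} {L' L : List α} (h : L'.Sublist L)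
    (hp : ∀ x ∈ L', ¬ p x) (hpr : ∀ x, p x → r x) (hqr : ∀ x, q x → r x) :
    L.countP p + L'.countP q ≤ L.countP r := by
  induction h with
  | slnil => simp
  | cons a _ ih => grind
  | cons_cons a _ ih => grind

theorem triplewise_of_sublist {R : α → α → α → Prop} {L' L : List α} (h : L'.Sublist L)
    (hL : L.Triplewise R) : L'.Triplewise R := by
  induction h with
  | slnil => exact hL
  | cons a _ ih => exact ih (List.triplewise_cons.1 hL).2
  | cons_cons a h ih =>
    have ⟨haL, hL⟩ := List.triplewise_cons.1 hL
    exact (ih hL).cons (haL.sublist h)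

open Classical in
theorem countP_mem_le_encard {L : List α} (hL : L.Nodup) (S : Set α) :
    (L.countP (· ∈ S) : ℕ∞) ≤ S.encard := by
  rw [List.countP_eq_length_filter, ← List.toFinset_card_of_nodup (hL.filter _),
    ← Set.encard_coe_eq_coe_finsetCard]
  refine Set.encard_le_encard fun x hx => ?_
  simpa using (List.mem_filter.1 (List.mem_toFinset.1 hx)).2

end Lists

section InducedPaths

variable {V : Type*} {G : SimpleGraph V}

theorem preconnected_induce_of_isChain {L : List V} (hL : L.IsChain G.Adj) :
    (G.induce {v | v ∈ L}).Preconnected := by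
  rcases eq_or_ne L [] with rfl | hne
  · exact fun ⟨v, hv⟩ => absurd hv List.not_mem_nil
  · have h := (Walk.ofSupport L hne hL).connected_induce_support
    rw [Walk.support_ofSupport] at h
    exact h.preconnected

theorem dist_getVert_of_length_eq_dist {u v : V} {w : G.Walk u v} (hw : w.length = G.dist u v)
    {i j : ℕ} (hij : i ≤ j) (hj : j ≤ w.length) :
    G.dist (w.getVert i) (w.getVert j) = j - i := by
  have hsub : ((w.drop i).take (j - i)).IsSubwalk w :=
    (Walk.isSubwalk_take _ _).trans (Walk.isSubwalk_drop _ _)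
  have h := length_eq_dist_of_subwalk hw hsub
  rw [Walk.take_length, Walk.drop_length, Walk.drop_getVert, Nat.add_sub_cancel' hij] at h
  omega

theorem exists_pathGraph_embedding_of_reachable {u v : V} (h : G.Reachable u v) :
    ∃ (m : ℕ) (f : pathGraph m ↪g G), u ∈ Set.range f ∧ v ∈ Set.range f := by
  obtain ⟨w, hw⟩ := h.exists_walk_length_eq_dist
  have hdist (i j : Fin (w.length + 1)) :
      G.dist (w.getVert i) (w.getVert j) = (j - i : ℕ) + (i - j : ℕ) := by
    rcases le_total (i : ℕ) j with hij | hij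
    · rw [dist_getVert_of_length_eq_dist hw hij (by omega)]
      omega
    · rw [dist_comm, dist_getVert_of_length_eq_dist hw hij (by omega)]
      omega
  refine ⟨w.length + 1, ⟨⟨fun i => w.getVert i, fun i j hij => ?_⟩, fun {i j} => ?_⟩, ?_, ?_⟩
  · have h0 : 0 = (j - i : ℕ) + (i - j : ℕ) := by
      rw [← hdist, show w.getVert i = w.getVert j from hij, dist_self]
    omega
  · change G.Adj (w.getVert i) (w.getVert j) ↔ _
    rw [← dist_eq_one_iff_adj, hdist, pathGraph_adj]
    omega
  · exact ⟨0, w.getVert_zero⟩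
  · exact ⟨Fin.last _, w.getVert_length⟩

theorem preconnected_induce_range_pathGraph {m : ℕ} (f : pathGraph m ↪g G) :
    (G.induce (Set.range f)).Preconnected :=
  (Iso.preconnected_iff f.isoInduceRange).1 (pathGraph_preconnected m)

theorem HasInducedPathGE.mono {r s : ℝ} (h : HasInducedPathGE G s) (hrs : r ≤ s) :
    HasInducedPathGE G r :=
  let ⟨m, hm, hf⟩ := h
  ⟨m, hrs.trans hm, hf⟩

end InducedPaths

section Betweenness

variable {N : Type*} {T : SimpleGraph N} {a b c d : N}

/-- `b` lies between `a` and `c`: in a tree, on the path joining them. This is expressed through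
the connected sets of nodes, since the unions of models that it is applied to are such sets. -/
def IsBetween (T : SimpleGraph N) (a b c : N) : Prop :=
  ∀ C : Set N, (T.induce C).Preconnected → a ∈ C → c ∈ C → b ∈ C

theorem isBetween_left : IsBetween T a a b := fun _ _ ha _ => ha

theorem isBetween_right : IsBetween T a b b := fun _ _ _ hb => hb

theorem IsBetween.trans_left (h : IsBetween T a b d) (h' : IsBetween T b c d) :
    IsBetween T a c d :=
  fun C hC ha hd => h' C hC (h C hC ha hd) hd

theorem exists_isPath_support_subset {C : Set N} (hC : (T.induce C).Preconnected) (ha : a ∈ C)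
    (hc : c ∈ C) : ∃ p : T.Walk a c, p.IsPath ∧ ∀ x ∈ p.support, x ∈ C := by
  obtain ⟨q, hq⟩ := hC.exists_isPath ⟨a, ha⟩ ⟨c, hc⟩
  let i : T.induce C ↪g T := Embedding.induce C
  refine ⟨q.map i.toHom, hq.map i.injective, fun x hx => ?_⟩
  obtain ⟨y, -, rfl⟩ := List.mem_map.1 (Walk.support_map i.toHom q ▸ hx)
  exact y.2

theorem isBetween_of_mem_support (hT : T.IsAcyclic) {p : T.Walk a c}
    (hp : p.IsPath) (hb : b ∈ p.support) : IsBetween T a b c := by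
  intro C hC ha hc
  obtain ⟨q, hq, hqC⟩ := exists_isPath_support_subset hC ha hc
  obtain rfl : p = q := congrArg Subtype.val <|
    (hT.subsingleton_path a c).elim ⟨p, hp⟩ ⟨q, hq⟩
  exact hqC b hb

theorem exists_forall_isBetween (hT : T.IsTree) {C : Set N} (hC : (T.induce C).Preconnected)
    (hne : C.Nonempty) (r : N) : ∃ t ∈ C, ∀ u ∈ C, IsBetween T r t u := by
  classical
  -- Let `t` be a node of `C` nearest to `r`: a shortest path from `r` to `t` meets `C` only in `t`.
  obtain ⟨t, ht, hmin⟩ := exists_minimalFor_of_wellFoundedLT (· ∈ C) (T.dist r) hne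
  refine ⟨t, ht, fun u hu => ?_⟩
  obtain ⟨p, hp, hlen⟩ := hT.connected.exists_path_of_dist r t
  obtain ⟨q, hq, hqC⟩ := exists_isPath_support_subset hC ht hu
  have hpC : ∀ y ∈ p.support, y ∈ C → y = t := by
    intro y hy hyC
    by_contra hyt
    have hlt := p.length_takeUntil_lt_length hy hyt
    have hle := T.dist_le (p.takeUntil y hy)
    have := hmin hyC (by omega)
    omega
  have hpq : (p.append q).IsPath := by
    have hqt : (t :: q.support.tail).Nodup := q.cons_tail_support.symm ▸ hq.support_nodup
    rw [Walk.isPath_def, Walk.support_append, List.nodup_append']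
    refine ⟨hp.support_nodup, hqt.of_cons, fun y hy hyq => (List.nodup_cons.1 hqt).1 ?_⟩
    exact hpC y hy (hqC y (List.mem_of_mem_tail hyq)) ▸ hyq
  exact isBetween_of_mem_support hT.isAcyclic hpq (by simp)

theorem exists_forall_isBetween_of_triplewise {P : List N} (hP : P.Triplewise (IsBetween T))
    (hne : P ≠ []) : ∃ a ∈ P, ∃ c ∈ P, ∀ b ∈ P, IsBetween T a b c := by
  cases hP with
  | nil => exact absurd rfl hne
  | @cons a L hL _ =>
    rcases eq_or_ne L [] with rfl | hLne
    · exact ⟨a, by simp, a, by simp, by simp [isBetween_left]⟩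
    · refine ⟨a, by simp, L.getLast hLne, by simp, fun b hb => ?_⟩
      rcases List.mem_cons.1 hb with rfl | hb
      · exact isBetween_left
      · exact hL.rel_getLast_of_rel_getLast_getLast hb isBetween_right

end Betweenness

namespace TreeRep

variable {V N : Type*} {G : SimpleGraph V} {T : SimpleGraph N} (R : TreeRep G T)

/-- The union of the models of the vertices in `S`. -/
def modelUnion (S : Set V) : Set N := ⋃ v ∈ S, R.model v

open Classical in
/-- The number of entries of `L` whose model meets the set of nodes `S`: the weight of a path of
`T`, localized to a path `L` of `G`. -/
noncomputable def weight (S : Set N) (L : List V) : ℕ :=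
  L.countP fun v => (R.model v ∩ S).Nonempty

theorem mem_modelUnion {S : Set V} {t : N} : t ∈ R.modelUnion S ↔ ∃ v ∈ S, t ∈ R.model v := by
  simp [modelUnion]

theorem modelUnion_nonempty {S : Set V} (hS : S.Nonempty) : (R.modelUnion S).Nonempty := by
  obtain ⟨v, hv⟩ := hS
  obtain ⟨x⟩ := (R.model_connected v).nonempty
  exact ⟨x, R.mem_modelUnion.2 ⟨v, hv, x.2⟩⟩

theorem preconnected_induce_modelUnion {S : Set V} (hS : (G.induce S).Preconnected) :
    (T.induce (R.modelUnion S)).Preconnected := by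
  have hsub (v : S) : R.model v ⊆ R.modelUnion S := Set.subset_biUnion_of_mem v.2
  have hreach (v : S) {x y : N} (hx : x ∈ R.model v) (hy : y ∈ R.model v) :
      (T.induce (R.modelUnion S)).Reachable ⟨x, hsub v hx⟩ ⟨y, hsub v hy⟩ :=
    ((R.model_connected v).preconnected ⟨x, hx⟩ ⟨y, hy⟩).map (induceHomOfLE T (hsub v)).toHom
  have hwalk {u v : S} (p : (G.induce S).Walk u v) : ∀ {x y : N} (hx : x ∈ R.model u)
      (hy : y ∈ R.model v),
      (T.induce (R.modelUnion S)).Reachable ⟨x, hsub u hx⟩ ⟨y, hsub v hy⟩ := by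
    induction p with
    | nil => exact hreach _
    | cons h _ ih =>
      intro x y hx hy
      obtain ⟨t, htu, htv⟩ := R.adj_meet h
      exact (hreach _ hx htu).trans (ih htv hy)
  rintro ⟨x, hx⟩ ⟨y, hy⟩
  obtain ⟨u, hu, hxu⟩ := R.mem_modelUnion.1 hx
  obtain ⟨v, hv, hyv⟩ := R.mem_modelUnion.1 hy
  obtain ⟨p⟩ := hS ⟨u, hu⟩ ⟨v, hv⟩
  exact hwalk p hxu hyv

theorem weight_pos_iff {t : N} {L : List V} :
    0 < R.weight {t} L ↔ t ∈ R.modelUnion {v | v ∈ L} := by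
  simp [weight, mem_modelUnion, List.countP_pos_iff]

theorem weight_singleton_le_encard_bag (t : N) {L : List V} (hL : L.Nodup) :
    (R.weight {t} L : ℕ∞) ≤ (R.bag t).encard := by
  classical
  have h : R.weight {t} L ≤ L.countP (· ∈ R.bag t) :=
    List.countP_mono_left fun v _ hv => by
      have ht : t ∈ R.model v := by simpa using hv
      exact decide_eq_true ht
  exact (Nat.cast_le.2 h).trans (countP_mem_le_encard hL _)

theorem weight_singleton_lt_of_sublist {t : N} {L' L : List V} (h : L'.Sublist L) {v : V}
    (hv : v ∈ L) (hv' : v ∉ L') (ht : t ∈ R.model v) : R.weight {t} L' < R.weight {t} L := by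
  classical
  have hpos : 0 < L.countP (· = v) := List.countP_pos_iff.2 ⟨v, hv, by simp⟩
  have := countP_add_countP_le_of_sublist (p := (· = v))
    (q := fun v => (R.model v ∩ {t}).Nonempty) (r := fun v => (R.model v ∩ {t}).Nonempty) h
    (by rintro x hx hxv; simp_all) (by simp_all) (by simp)
  simp only [weight]
  omega

theorem weight_singleton_add_weight_le {t : N} {S S' : Set N} (htS' : t ∈ S') (hSS' : S ⊆ S')
    {L' L : List V} (h : L'.Sublist L) (hL' : ∀ v ∈ L', t ∉ R.model v) :
    R.weight {t} L + R.weight S L' ≤ R.weight S' L := by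
  refine countP_add_countP_le_of_sublist h (by simpa using hL') (fun v hv => ?_) (fun v hv => ?_)
  · simp only [decide_eq_true_eq, Set.inter_singleton_nonempty] at hv ⊢
    exact ⟨t, hv, htS'⟩
  · simp only [decide_eq_true_eq] at hv ⊢
    exact hv.mono (Set.inter_subset_inter_right _ hSS')

theorem exists_length_lt_two_pow_weight (hT : T.IsTree) (L : List V) (hL : L.IsChain G.Adj)
    (r : N) : ∃ P : List N, (r :: P).Triplewise (IsBetween T) ∧
      (∀ x ∈ P, x ∈ R.modelUnion {v | v ∈ L}) ∧ L.length < 2 ^ R.weight {x | x ∈ P} L := by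
  classical
  induction hn : L.length using Nat.strong_induction_on generalizing L r with
  | _ n ih =>
    rcases eq_or_ne L [] with rfl | hne
    · exact ⟨[], by simp, by simp, by simp [← hn]⟩
    · obtain ⟨t, htL, ht⟩ := exists_forall_isBetween hT
        (R.preconnected_induce_modelUnion (preconnected_induce_of_isChain hL))
        (R.modelUnion_nonempty (List.exists_mem_of_ne_nil L hne)) r
      obtain ⟨L', hL', htL', hlt⟩ :=
        exists_infix_countP_lt_mul (fun v => (R.model v ∩ {t}).Nonempty) (fun _ => true) L
      simp only [decide_eq_true_eq, Set.inter_singleton_nonempty] at htL'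
      obtain ⟨v, hv, htv⟩ := R.mem_modelUnion.1 htL
      have hlen : L'.length < n := by
        refine hn ▸ hL'.length_le.lt_of_ne fun h => htL' v ?_ htv
        exact (hL'.eq_of_length h).symm ▸ hv
      obtain ⟨P, hP, hPL', hlt'⟩ := ih _ hlen L' (hL.infix hL') t rfl
      have hPL : ∀ x ∈ P, x ∈ R.modelUnion {v | v ∈ L} := fun x hx =>
        Set.biUnion_subset_biUnion_left (fun _ h => hL'.subset h) (hPL' x hx)
      refine ⟨t :: P, ?_, by simpa using ⟨htL, hPL⟩, ?_⟩
      · have htP := (List.triplewise_cons.1 hP).1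
        refine .cons (List.pairwise_cons.2 ⟨fun c hc => ht c (hPL c hc), ?_⟩) hP
        exact htP.imp_of_mem fun _ hc h => (ht _ (hPL _ hc)).trans_left h
      · simp only [List.countP_true] at hlt
        calc n < (R.weight {t} L + 1) * (L'.length + 1) := hn ▸ hlt
          _ ≤ 2 ^ R.weight {t} L * 2 ^ R.weight {x | x ∈ P} L' :=
            Nat.mul_le_mul Nat.lt_two_pow_self hlt'
          _ = 2 ^ (R.weight {t} L + R.weight {x | x ∈ P} L') := (pow_add _ _ _).symm
          _ ≤ 2 ^ R.weight {x | x ∈ t :: P} L := Nat.pow_le_pow_right two_pos <|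
            R.weight_singleton_add_weight_le (by simp) (by simp +contextual [Set.subset_def])
              hL'.sublist htL'

theorem exists_pathGraph_embedding_cover {P : List N} (hP : P.Triplewise (IsBetween T)) {S : Set V}
    (hS : (G.induce S).Preconnected) : ∃ (m : ℕ) (f : pathGraph m ↪g G), Set.range f ⊆ S ∧
      ∀ b ∈ P, b ∈ R.modelUnion S → b ∈ R.modelUnion (Set.range f) := by
  classical
  rcases eq_or_ne (P.filter (· ∈ R.modelUnion S)) [] with hnil | hne
  · refine ⟨0, RelEmbedding.ofIsEmpty _ _, by simp, fun b hb hbS => ?_⟩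
    simpa [hbS] using List.filter_eq_nil_iff.1 hnil b hb
  · obtain ⟨a, ha, c, hc, hac⟩ := exists_forall_isBetween_of_triplewise
      (triplewise_of_sublist List.filter_sublist hP) hne
    simp only [List.mem_filter, decide_eq_true_eq] at ha hc hac
    obtain ⟨u, hu, hau⟩ := R.mem_modelUnion.1 ha.2
    obtain ⟨v, hv, hcv⟩ := R.mem_modelUnion.1 hc.2
    obtain ⟨m, f, ⟨i, hi⟩, ⟨j, hj⟩⟩ := exists_pathGraph_embedding_of_reachable (hS ⟨u, hu⟩ ⟨v, hv⟩)
    let g : pathGraph m ↪g G := (Embedding.induce S).comp f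
    refine ⟨m, g, ?_, fun b hb hbS => ?_⟩
    · rintro _ ⟨x, rfl⟩
      exact (f x).2
    · refine hac b ⟨hb, hbS⟩ _
        (R.preconnected_induce_modelUnion (preconnected_induce_range_pathGraph g))
        (R.mem_modelUnion.2 ⟨u, ⟨i, congrArg Subtype.val hi⟩, hau⟩)
        (R.mem_modelUnion.2 ⟨v, ⟨j, congrArg Subtype.val hj⟩, hcv⟩)

theorem weight_lt_pow {P : List N} (hP : P.Triplewise (IsBetween T)) {s : ℕ}
    (hs : ∀ m, Nonempty (pathGraph m ↪g G) → m < s) {k : ℕ} {L : List V} (hL : L.IsChain G.Adj)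
    (hLn : L.Nodup) (hk : ∀ t ∈ P, R.weight {t} L ≤ k) : R.weight {x | x ∈ P} L < s ^ k := by
  classical
  induction k generalizing L with
  | zero =>
    refine Nat.lt_one_iff.2 (List.countP_eq_zero.2 fun v hv h => ?_)
    obtain ⟨t, htv, ht⟩ := of_decide_eq_true h
    exact (hk t ht).not_gt (R.weight_pos_iff.2 (R.mem_modelUnion.2 ⟨v, hv, htv⟩))
  | succ k ih =>
    obtain ⟨m, f, hfL, hf⟩ := R.exists_pathGraph_embedding_cover hP
      (preconnected_induce_of_isChain hL)
    obtain ⟨L', hL', hfL', hlt⟩ := exists_infix_countP_lt_mul (· ∈ Set.range f)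
      (fun v => (R.model v ∩ {x | x ∈ P}).Nonempty) L
    have hcard : L.countP (· ∈ Set.range f) < s := by
      have h := countP_mem_le_encard hLn (Set.range f)
      rw [← Set.image_univ, f.injective.encard_image] at h
      have h' : L.countP (· ∈ Set.range f) ≤ m := by simpa using h
      exact h'.trans_lt (hs m ⟨f⟩)
    have hk' : ∀ t ∈ P, R.weight {t} L' ≤ k := by
      intro t ht
      by_contra! hlt'
      obtain ⟨v, hv, htv⟩ := R.mem_modelUnion.1 (R.weight_pos_iff.1 (Nat.zero_lt_of_lt hlt'))
      obtain ⟨w, hw, htw⟩ := R.mem_modelUnion.1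
        (hf t ht (R.mem_modelUnion.2 ⟨v, hL'.subset hv, htv⟩))
      have := R.weight_singleton_lt_of_sublist hL'.sublist (hfL hw)
        (fun h => by simpa [hw] using hfL' w h) htw
      have := hk t ht
      omega
    calc R.weight {x | x ∈ P} L
        < (L.countP (· ∈ Set.range f) + 1) * (R.weight {x | x ∈ P} L' + 1) := hlt
      _ ≤ s * s ^ k := Nat.mul_le_mul hcard (ih (hL.infix hL') (hLn.sublist hL'.sublist) hk')
      _ = s ^ (k + 1) := (pow_succ' s k).symm

theorem encard_bag_le {k : ℕ} [Finite V] (hR : R.WidthLT k) (t : N) : (R.bag t).encard ≤ k := by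
  rw [← (Set.toFinite _).cast_ncard_eq]
  exact mod_cast hR t

end TreeRep

theorem hasInducedPathGE_of_two_pow_pow_le {V N : Type*} {G : SimpleGraph V} {T : SimpleGraph N}
    (hT : T.IsTree) (R : TreeRep G T) {k n s : ℕ} (hR : ∀ t, (R.bag t).encard ≤ k)
    (hpath : HasPathOfOrder G n) (hsn : 2 ^ s ^ k ≤ n) : HasInducedPathGE G s := by
  by_contra hind
  have hs (m : ℕ) (hm : Nonempty (pathGraph m ↪g G)) : m < s := by
    by_contra! hsm
    exact hind ⟨m, mod_cast hsm, hm⟩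
  obtain ⟨u, v, p, hp, rfl⟩ := hpath
  obtain ⟨r⟩ := hT.connected.nonempty
  obtain ⟨P, hP, -, hlt⟩ := R.exists_length_lt_two_pow_weight hT p.support p.isChain_adj_support r
  have hweight : R.weight {x | x ∈ P} p.support < s ^ k :=
    R.weight_lt_pow (List.triplewise_cons.1 hP).2 hs p.isChain_adj_support hp.support_nodup
      fun t _ => mod_cast (R.weight_singleton_le_encard_bag t hp.support_nodup).trans (hR t)
  rw [p.length_support] at hlt
  exact (hlt.trans (Nat.pow_lt_pow_right one_lt_two hweight)).not_ge hsn

theorem two_pow_floor_logb_rpow_le {n k : ℕ} (hn : 0 < n) (hk : 0 < k) :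
    2 ^ ⌊Real.logb 2 n ^ ((1 : ℝ) / k)⌋₊ ^ k ≤ n := by
  have hn1 : (1 : ℝ) ≤ n := mod_cast hn
  have hlog : 0 ≤ Real.logb 2 n := Real.logb_nonneg one_lt_two hn1
  have hfloor : (⌊Real.logb 2 n ^ ((1 : ℝ) / k)⌋₊ : ℝ) ^ k ≤ Real.logb 2 n := by
    calc (⌊Real.logb 2 n ^ ((1 : ℝ) / k)⌋₊ : ℝ) ^ k
        ≤ (Real.logb 2 n ^ ((1 : ℝ) / k)) ^ k := by
          gcongr
          exact Nat.floor_le (Real.rpow_nonneg hlog _)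
      _ = Real.logb 2 n := by rw [one_div, Real.rpow_inv_natCast_pow hlog hk.ne']
  rw [Real.le_logb_iff_rpow_le one_lt_two (by positivity)] at hfloor
  exact mod_cast hfloor

theorem half_logb_rpow_le_floor (n : ℕ) {a : ℝ} (ha : 0 < a) :
    (1 / 2 : ℝ) * Real.logb 2 n ^ a ≤ ⌊Real.logb 2 n ^ a⌋₊ := by
  rcases lt_or_ge n 2 with hn | hn
  · have h0 : Real.logb 2 n = 0 := by interval_cases n <;> simp
    simp [h0, Real.zero_rpow ha.ne']
  · have hlog : 1 ≤ Real.logb 2 n := by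
      rw [Real.le_logb_iff_rpow_le one_lt_two (by positivity), Real.rpow_one]
      exact mod_cast hn
    have hx : 1 ≤ Real.logb 2 n ^ a := Real.one_le_rpow hlog ha.le
    have hfloor : (1 : ℝ) ≤ ⌊Real.logb 2 n ^ a⌋₊ := mod_cast (Nat.one_le_floor_iff _).2 hx
    linarith [Nat.lt_floor_add_one (Real.logb 2 n ^ a)]

/-- Bags are bounded in `encard`, since `ncard` is `0` on infinite sets. -/
theorem stmt2_general {V N : Type*} (k : ℕ) (hk : 0 < k) (G : SimpleGraph V) {T : SimpleGraph N}
    (hT : T.IsTree) (R : TreeRep G T) (hR : ∀ t, (R.bag t).encard ≤ k) (n : ℕ)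
    (hpath : HasPathOfOrder G n) :
    HasInducedPathGE G ((1 / 2 : ℝ) * Real.logb 2 n ^ ((1 : ℝ) / k)) := by
  have hn : 0 < n := by
    obtain ⟨_, _, _, -, rfl⟩ := hpath
    exact Nat.succ_pos _
  exact (hasInducedPathGE_of_two_pow_pow_le hT R hR hpath (two_pow_floor_logb_rpow_le hn hk)).mono
    (half_logb_rpow_le_floor n (by positivity))

theorem stmt2 {V : Type} [Fintype V] (k : ℕ) (hk : 0 < k) (G : SimpleGraph V) (n : ℕ)
    (htw : TreewidthLT G k) (hpath : HasPathOfOrder G n) :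
    HasInducedPathGE G ((1 / 4 : ℝ) * Real.logb 2 n ^ ((1 : ℝ) / k)) := by
  obtain ⟨N, _, T, hT, R, hR⟩ := htw
  refine (stmt2_general k hk G hT R (R.encard_bag_le hR) n hpath).mono ?_
  have hlog : 0 ≤ Real.logb 2 n := div_nonneg (Real.log_natCast_nonneg n) (by positivity)
  gcongr
  norm_num
end

section
/- For all positive integers k and ℓ there is a constant d ∈ (0,1) such that the following holds: if a graph G is k-degenerate, has no induced cycle on at least ℓ vertices, and has a path of order n, then G has an induced path of order at least (log₂ n)^d. -/
open SimpleGraph Real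

/-!
Suppose that every induced path of `G` has order at most `L`, and cut a long path of `G` recursively
into disjoint subpaths. If a vertex can be separated from one of these pieces by few other vertices,
then from every vertex of the piece one of the separating vertices is closer; as distances are less
than `L`, passing to smaller pieces and to separating vertices must stop, at a vertex that few
vertices cannot separate from any of the remaining pieces. Iterating, a path of order more than
`2 ^ poly(L)` yields many vertices no two of which are separated by fewer than `poly(L)` others, so
that any two of them are joined by many disjoint links. By degeneracy these vertices can be taken
independent, and among many links between two of them there are two with no edge in between; closing
a shortest path through one by the other shows that the links may be taken to have at most `ℓ`
vertices. Finally there are so few edges between the links that, for `ℓ + 3` of the vertices chosen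
at random and ordered cyclically, links of consecutive vertices touch nothing else, and their union
contains an induced cycle of order more than `ℓ`.
-/

universe u

section Geodesics

variable {V : Type u} {G H : SimpleGraph V} {U U' : Set V} {a b : V}

/-- The edges of `G` inside `U`, as a graph on all of `V`: reachability and distance in it are
reachability and distance along walks of `G` inside `U`, without passing to a subtype. -/
def edgesWithin (G : SimpleGraph V) (U : Set V) : SimpleGraph V :=
  ((⊤ : G.Subgraph).induce U).spanningCoe

lemma edgesWithin_adj : (edgesWithin G U).Adj a b ↔ a ∈ U ∧ b ∈ U ∧ G.Adj a b := Iff.rfl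

lemma edgesWithin_mono (h : U ⊆ U') : edgesWithin G U ≤ edgesWithin G U' :=
  fun _ _ hab => ⟨h hab.1, h hab.2.1, hab.2.2⟩

lemma edgesWithin_le : edgesWithin G U ≤ G := fun _ _ hab => hab.2.2

lemma mem_of_reachable_edgesWithin (h : (edgesWithin G U).Reachable a b) (ha : a ∈ U) :
    b ∈ U := by
  obtain ⟨p⟩ := h
  induction p with
  | nil => exact ha
  | cons hadj _ ih => exact ih hadj.2.1

lemma reachable_edgesWithin_of_support_subset (hHG : H ≤ G) (p : H.Walk a b)
    (hp : ∀ v ∈ p.support, v ∈ U) : (edgesWithin G U).Reachable a b := by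
  induction p with
  | nil => rfl
  | cons hadj q ih =>
    simp only [Walk.support_cons, List.mem_cons, forall_eq_or_imp] at hp
    exact (Adj.reachable (edgesWithin_adj.2 ⟨hp.1, hp.2 _ q.start_mem_support, hHG hadj⟩)).trans
      (ih hp.2)

lemma reachable_edgesWithin_of_connected {Q : Set V} (hQ : (G.induce Q).Connected) (hQU : Q ⊆ U)
    (ha : a ∈ Q) (hb : b ∈ Q) : (edgesWithin G U).Reachable a b :=
  (hQ ⟨a, ha⟩ ⟨b, hb⟩).map
    (⟨Subtype.val, fun {u v} huv => ⟨hQU u.2, hQU v.2, huv⟩⟩ : G.induce Q →g edgesWithin G U)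

lemma dist_getVert_of_length_eq_dist_s4 {p : H.Walk a b} (hp : p.length = H.dist a b) {i : ℕ}
    (hi : i ≤ p.length) : H.dist a (p.getVert i) = i := by
  rw [← length_eq_dist_of_subwalk hp (p.isSubwalk_take i), Walk.take_length, min_eq_left hi]

lemma adj_getVert_iff_of_length_eq_dist {p : H.Walk a b} (hp : p.length = H.dist a b) {i j : ℕ}
    (hi : i ≤ p.length) (hj : j ≤ p.length) :
    H.Adj (p.getVert i) (p.getVert j) ↔ i + 1 = j ∨ j + 1 = i := by
  constructor
  · intro hadj
    have hne : p.getVert i ≠ p.getVert j := hadj.ne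
    have hdist := hadj.diff_dist_adj (u := a)
    rw [dist_getVert_of_length_eq_dist_s4 hp hi, dist_getVert_of_length_eq_dist_s4 hp hj] at hdist
    have : i ≠ j := fun h => hne (by rw [h])
    omega
  · rintro (rfl | rfl)
    · exact p.adj_getVert_succ hj
    · exact (p.adj_getVert_succ hi).symm

lemma exists_pathGraph_embedding_of_length_eq_dist (ha : a ∈ U) {p : (edgesWithin G U).Walk a b}
    (hp : p.length = (edgesWithin G U).dist a b) :
    ∃ φ : pathGraph (p.length + 1) ↪g G, ∀ i, φ i = p.getVert i ∧ φ i ∈ U := by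
  have hU : ∀ i, p.getVert i ∈ U := fun i =>
    mem_of_reachable_edgesWithin ⟨p.take i⟩ ha
  refine ⟨⟨⟨fun i => p.getVert i, fun i j hij => ?_⟩, fun {i j} => ?_⟩, fun i => ⟨rfl, hU i⟩⟩
  · have hdist := congrArg ((edgesWithin G U).dist a) hij
    rw [dist_getVert_of_length_eq_dist_s4 hp i.is_le, dist_getVert_of_length_eq_dist_s4 hp j.is_le]
      at hdist
    exact Fin.ext hdist
  · rw [pathGraph_adj, ← adj_getVert_iff_of_length_eq_dist hp i.is_le j.is_le, edgesWithin_adj]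
    simp only [hU, true_and]
    rfl

lemma exists_shortest_walk_between {A B : Set V} (ha : a ∈ A) (hb : b ∈ B)
    (hab : H.Reachable a b) :
    ∃ a' ∈ A, ∃ b' ∈ B, ∃ p : H.Walk a' b', p.length = H.dist a' b' ∧
      (∀ i ≤ p.length, p.getVert i ∈ A → i = 0) ∧
      (∀ i ≤ p.length, p.getVert i ∈ B → i = p.length) := by
  classical
  have hex : ∃ n, ∃ a' ∈ A, ∃ b' ∈ B, ∃ p : H.Walk a' b', p.length = n :=
    ⟨_, a, ha, b, hb, hab.some, rfl⟩
  have hmin {c d : V} (hc : c ∈ A) (hd : d ∈ B) (q : H.Walk c d) : Nat.find hex ≤ q.length :=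
    Nat.find_min' hex ⟨c, hc, d, hd, q, rfl⟩
  obtain ⟨a', ha', b', hb', p, hp⟩ := Nat.find_spec hex
  refine ⟨a', ha', b', hb', p, ?_, fun i hi hiA => ?_, fun i hi hiB => ?_⟩
  · obtain ⟨q, hq⟩ := (Walk.reachable p).exists_walk_length_eq_dist
    exact le_antisymm (hp ▸ hq ▸ hmin ha' hb' q) (dist_le p)
  · have := hmin hiA hb' (p.drop i)
    rw [Walk.drop_length] at this
    omega
  · have := hmin ha' hiB (p.take i)
    rw [Walk.take_length] at this
    omega

/-- Every induced path of `G` has order at most `L`. -/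
def InducedPathOrderLE (G : SimpleGraph V) (L : ℕ) : Prop :=
  ∀ m, Nonempty (pathGraph m ↪g G) → m ≤ L

lemma InducedPathOrderLE.dist_lt {L : ℕ} (hL : InducedPathOrderLE G L) (ha : a ∈ U)
    (hab : (edgesWithin G U).Reachable a b) : (edgesWithin G U).dist a b < L := by
  obtain ⟨p, hp⟩ := hab.exists_walk_length_eq_dist
  obtain ⟨φ, -⟩ := exists_pathGraph_embedding_of_length_eq_dist ha hp
  rw [← hp]
  exact hL _ ⟨φ⟩

lemma InducedPathOrderLE.two_le {L : ℕ} (hL : InducedPathOrderLE G L) (hab : G.Adj a b) :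
    2 ≤ L := by
  have hadj : (edgesWithin G Set.univ).Adj a b := ⟨trivial, trivial, hab⟩
  have hdist := hL.dist_lt (Set.mem_univ a) hadj.reachable
  rwa [dist_eq_one_iff_adj.2 hadj] at hdist

end Geodesics

section InducedCycles

variable {V : Type u} {G : SimpleGraph V}

lemma nonempty_ringGraph_iso_cycleGraph (d : ℕ) :
    Nonempty (ringGraph (d + 2) ≃g cycleGraph (d + 2)) := by
  have hadj : ∀ i j : Fin (d + 2),
      (cycleGraph (d + 2)).Adj i j ↔ i ≠ j ∧ (j = i + 1 ∨ i = j + 1) := fun i j => by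
    rw [cycleGraph_adj, sub_eq_iff_eq_add', sub_eq_iff_eq_add', or_comm, iff_and_self]
    rintro h rfl
    simp at h
  exact ⟨⟨Equiv.refl (Fin (d + 2)), hadj _ _⟩⟩

lemma cycleGraph_adj_zero_succ {d : ℕ} (i : Fin (d + 1)) :
    (cycleGraph (d + 2)).Adj 0 i.succ ↔ i = 0 ∨ i = Fin.last d := by
  rw [cycleGraph_adj', Fin.ext_iff, Fin.ext_iff, zero_sub, sub_zero, Fin.val_neg]
  simp only [Fin.succ_ne_zero, if_false, Fin.val_succ, Fin.val_zero, Fin.val_last]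
  omega

lemma cycleGraph_adj_succ_succ {d : ℕ} (i j : Fin (d + 1)) :
    (cycleGraph (d + 2)).Adj i.succ j.succ ↔ (pathGraph (d + 1)).Adj i j := by
  have hsub : ∀ i j : Fin (d + 1), (i.succ - j.succ).val = 1 ↔ j.val + 1 = i.val := fun i j => by
    rcases le_or_gt j.succ i.succ with hij | hij
    · rw [Fin.coe_sub_iff_le.2 hij, Fin.val_succ, Fin.val_succ]
      omega
    · rw [Fin.coe_sub_iff_lt.2 hij, Fin.val_succ, Fin.val_succ]
      have := Fin.succ_lt_succ_iff.1 hij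
      omega
  rw [cycleGraph_adj', pathGraph_adj, hsub, hsub, or_comm]

lemma nonempty_ringGraph_embedding_of_pathGraph {d : ℕ} (φ : pathGraph (d + 1) ↪g G) {x : V}
    (hx : ∀ i, φ i ≠ x) (hadj : ∀ i, G.Adj x (φ i) ↔ i = 0 ∨ i = Fin.last d) :
    Nonempty (ringGraph (d + 2) ↪g G) := by
  let ψ : Fin (d + 2) → V := Fin.cons x φ
  have hψ : Function.Injective ψ :=
    Fin.cons_injective_iff.2 ⟨fun ⟨i, hi⟩ => hx i hi, φ.injective⟩
  have hψadj : ∀ i j : Fin (d + 2), G.Adj (ψ i) (ψ j) ↔ (cycleGraph (d + 2)).Adj i j := by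
    refine Fin.cases (Fin.cases ?_ fun j => ?_) fun i => Fin.cases ?_ fun j => ?_
    · simp only [SimpleGraph.irrefl]
    · rw [cycleGraph_adj_zero_succ]
      exact hadj j
    · rw [adj_comm, (cycleGraph (d + 2)).adj_comm, cycleGraph_adj_zero_succ]
      exact hadj i
    · rw [cycleGraph_adj_succ_succ]
      exact φ.map_adj_iff
  obtain ⟨e⟩ := nonempty_ringGraph_iso_cycleGraph d
  let χ : cycleGraph (d + 2) ↪g G := ⟨⟨ψ, hψ⟩, hψadj _ _⟩
  exact ⟨χ.comp e.toEmbedding⟩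

/-- No induced cycle of `G` has `ℓ` or more vertices. -/
def InducedCycleOrderLT (G : SimpleGraph V) (ℓ : ℕ) : Prop :=
  ∀ m : ℕ, 3 ≤ m → ℓ ≤ m → IsEmpty (ringGraph m ↪g G)

/-- The sets `Z 0, …, Z D` are disjoint, and edges of `G` join only equal or consecutive ones. -/
structure IsLayering (G : SimpleGraph V) (Z : ℕ → Set V) (D : ℕ) : Prop where
  eq_of_mem {i j v} : i ≤ D → j ≤ D → v ∈ Z i → v ∈ Z j → i = j
  le_succ_of_adj {i j u v} : i ≤ D → j ≤ D → u ∈ Z i → v ∈ Z j → G.Adj u v → j ≤ i + 1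

namespace IsLayering

variable {Z : ℕ → Set V} {D : ℕ} {a b x : V}

lemma layer_getVert_le (hZ : IsLayering G Z D) (ha : a ∈ Z 0)
    (p : (edgesWithin G (⋃ i ≤ D, Z i)).Walk a b) {n j : ℕ} (hj : j ≤ D)
    (hn : p.getVert n ∈ Z j) : j ≤ n := by
  induction n generalizing j with
  | zero =>
    rw [Walk.getVert_zero] at hn
    exact (hZ.eq_of_mem hj D.zero_le hn ha).le
  | succ n ih =>
    rcases lt_or_ge n p.length with hnp | hnp
    · have hadj := edgesWithin_adj.1 (p.adj_getVert_succ hnp)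
      obtain ⟨i, hi, hni⟩ := Set.mem_iUnion₂.1 hadj.1
      exact (hZ.le_succ_of_adj hi hj hni hn hadj.2.2).trans (Nat.succ_le_succ (ih hi hni))
    · rw [p.getVert_of_length_le (hnp.trans n.le_succ), ← p.getVert_of_length_le hnp] at hn
      exact (ih hj hn).trans n.le_succ

theorem add_two_lt_of_inducedCycleOrderLT {ℓ : ℕ} (hG : InducedCycleOrderLT G ℓ)
    (hZ : IsLayering G Z D) (hD : 1 ≤ D) (hxZ : ∀ i ≤ D, x ∉ Z i)
    (hxadj : ∀ i ≤ D, ∀ v ∈ Z i, G.Adj x v → i = 0 ∨ i = D)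
    (ha : a ∈ Z 0) (hxa : G.Adj x a) (hb : b ∈ Z D) (hxb : G.Adj x b)
    (hab : (edgesWithin G (⋃ i ≤ D, Z i)).Reachable a b) : D + 2 < ℓ := by
  obtain ⟨a, ⟨ha, hxa⟩, b, ⟨hb, hxb⟩, p, hp, hpA, hpB⟩ :=
    exists_shortest_walk_between (A := {v ∈ Z 0 | G.Adj x v}) (B := {v ∈ Z D | G.Adj x v})
      ⟨ha, hxa⟩ ⟨hb, hxb⟩ hab
  obtain ⟨φ, hφ⟩ := exists_pathGraph_embedding_of_length_eq_dist
    (Set.mem_iUnion₂.2 ⟨0, D.zero_le, ha⟩) hp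
  have hDp : D ≤ p.length := hZ.layer_getVert_le ha p le_rfl (by rwa [Walk.getVert_length])
  have hxφ (i) : φ i ≠ x := fun h => by
    obtain ⟨j, hj, hij⟩ := Set.mem_iUnion₂.1 (hφ i).2
    exact hxZ j hj (h ▸ hij)
  have hxφadj (i) : G.Adj x (φ i) ↔ i = 0 ∨ i = Fin.last p.length := by
    constructor
    · intro hadj
      obtain ⟨j, hj, hij⟩ := Set.mem_iUnion₂.1 (hφ i).2
      rw [(hφ i).1] at hadj hij
      rcases hxadj j hj _ hij hadj with rfl | rfl
      · exact .inl (Fin.ext (hpA i i.is_le ⟨hij, hadj⟩))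
      · exact .inr (Fin.ext (hpB i i.is_le ⟨hij, hadj⟩))
    · rintro (rfl | rfl)
      · simpa [(hφ _).1] using hxa
      · simpa [(hφ _).1] using hxb
  by_contra! hℓ
  obtain ⟨ψ⟩ := nonempty_ringGraph_embedding_of_pathGraph φ hxφ hxφadj
  exact (hG (p.length + 2) (by omega) (by omega)).false ψ

end IsLayering

end InducedCycles

section Hierarchies

variable {V : Type u} {G : SimpleGraph V} {p q : Set V → Prop} {R R' D : ℕ} {Q : Set V}

/-- `Q` is the root of a tree of nested connected sets of depth `D`: each set that is not a leaf
contains `R` pairwise disjoint connected sets of the next level, and the leaves satisfy `p`. -/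
def HasHierarchy (G : SimpleGraph V) (p : Set V → Prop) (R : ℕ) : ℕ → Set V → Prop
  | 0, Q => (G.induce Q).Connected ∧ p Q
  | D + 1, Q => (G.induce Q).Connected ∧ ∃ f : Fin R → Set V,
      (∀ i, f i ⊆ Q) ∧ Pairwise (Function.onFun Disjoint f) ∧ ∀ i, HasHierarchy G p R D (f i)

lemma exists_subset_compl_of_card_lt {ι : Type*} [Fintype ι] {f : ι → Set V}
    (hf : Pairwise (Function.onFun Disjoint f)) {S : Finset V} (hS : S.card < Fintype.card ι) :
    ∃ i, f i ⊆ (↑S : Set V)ᶜ := by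
  by_contra! h
  simp only [Set.not_subset, Set.notMem_compl_iff, Finset.mem_coe] at h
  choose g hgf hgS using h
  obtain ⟨i, -, j, -, hij, hg⟩ := Finset.exists_ne_map_eq_of_card_lt_of_maps_to
    (s := Finset.univ) (t := S) hS (fun i _ => hgS i)
  exact Set.disjoint_left.1 (hf hij) (hgf i) (hg ▸ hgf j)

namespace HasHierarchy

lemma connected (h : HasHierarchy G p R D Q) : (G.induce Q).Connected := by
  cases D <;> exact h.1

lemma nonempty (h : HasHierarchy G p R D Q) : Q.Nonempty :=
  Set.nonempty_coe_sort.1 h.connected.nonempty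

lemma mono (hpq : ∀ T, p T → q T) (h : HasHierarchy G p R D Q) : HasHierarchy G q R D Q := by
  induction D generalizing Q with
  | zero => exact ⟨h.1, hpq _ h.2⟩
  | succ D ih =>
    obtain ⟨hQ, f, hfQ, hf, hT⟩ := h
    exact ⟨hQ, f, hfQ, hf, fun i => ih (hT i)⟩

lemma split {a b : ℕ} (h : HasHierarchy G p R (b + a) Q) :
    HasHierarchy G (HasHierarchy G p R b) R a Q := by
  induction a generalizing Q with
  | zero => exact ⟨h.connected, h⟩
  | succ a ih =>
    obtain ⟨hQ, f, hfQ, hf, hT⟩ := h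
    exact ⟨hQ, f, hfQ, hf, fun i => ih (hT i)⟩

lemma of_monotone (hp : Monotone p) (hR : 0 < R) (h : HasHierarchy G p R D Q) : p Q := by
  induction D generalizing Q with
  | zero => exact h.2
  | succ D ih =>
    obtain ⟨-, f, hfQ, -, hT⟩ := h
    exact hp (hfQ ⟨0, hR⟩) (ih (hT ⟨0, hR⟩))

lemma exists_child_subset_compl (h : HasHierarchy G p R (D + 1) Q) {S : Finset V}
    (hS : S.card < R) : ∃ T ⊆ (↑S : Set V)ᶜ, HasHierarchy G p R D T := by
  obtain ⟨-, f, -, hf, hT⟩ := h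
  obtain ⟨i, hi⟩ := exists_subset_compl_of_card_lt hf (by rwa [Fintype.card_fin])
  exact ⟨f i, hi, hT i⟩

lemma exists_monochromatic {α : Type*} {S : Finset α} (hS : S.Nonempty)
    {c : α → Set V → Prop} (hR : S.card * R' ≤ R) (h : HasHierarchy G p R D Q)
    (hc : ∀ T ⊆ Q, p T → ∃ s ∈ S, c s T) :
    ∃ s ∈ S, HasHierarchy G (fun T => p T ∧ c s T) R' D Q := by
  classical
  induction D generalizing Q with
  | zero =>
    obtain ⟨s, hs, hcs⟩ := hc _ le_rfl h.2
    exact ⟨s, hs, h.1, h.2, hcs⟩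
  | succ D ih =>
    obtain ⟨hQ, f, hfQ, hf, hT⟩ := h
    choose g hgS hg using fun i => ih (hT i) fun T hT => hc T (hT.trans (hfQ i))
    obtain ⟨s, hs, hcard⟩ := Finset.exists_le_card_fiber_of_mul_le_card_of_maps_to
      (s := Finset.univ) (f := g) (fun i _ => hgS i) hS (by simpa using hR)
    obtain ⟨t, ht, htcard⟩ := Finset.exists_subset_card_eq hcard
    let e : Fin R' ↪ Fin R := (t.equivFinOfCardEq htcard).symm.toEmbedding.trans (.subtype _)
    have he : ∀ i, g (e i) = s := fun i =>
      (Finset.mem_filter.1 (ht ((t.equivFinOfCardEq htcard).symm i).2)).2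
    exact ⟨s, hs, hQ, f ∘ e, fun i => hfQ _, hf.comp_of_injective e.injective,
      fun i => he i ▸ hg (e i)⟩

end HasHierarchy

lemma connected_induce_image_Ico {v : ℕ → V} {a b : ℕ} (hab : a < b)
    (hv : ∀ i, i + 1 < b → G.Adj (v i) (v (i + 1))) : (G.induce (v '' Set.Ico a b)).Connected := by
  induction b, hab using Nat.le_induction with
  | base =>
    rw [Nat.succ_eq_add_one, ← Finset.coe_Ico, Nat.Ico_succ_singleton, Finset.coe_singleton,
      Set.image_singleton]
    exact Connected.mk Preconnected.of_subsingleton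
  | succ n hn ih =>
    obtain ⟨m, rfl⟩ : ∃ m, n = m + 1 := ⟨n - 1, by omega⟩
    have hunion : v '' Set.Ico a (m + 1 + 1) = v '' Set.Ico a (m + 1) ∪ {v m, v (m + 1)} := by
      rw [← Set.image_pair, ← Set.image_union]
      congr 1
      ext i
      simp only [Set.mem_Ico, Set.mem_union, Set.mem_insert_iff, Set.mem_singleton_iff]
      omega
    rw [hunion]
    refine induce_union_connected (ih fun i hi => hv i (hi.trans (Nat.lt_succ_self _))).preconnected
      (induce_pair_connected_of_adj (hv m (Nat.lt_succ_self _))).preconnected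
      ⟨v m, ⟨m, ⟨by omega, Nat.lt_succ_self m⟩, rfl⟩, .inl rfl⟩

lemma hasHierarchy_image_Ico {v : ℕ → V} {N a : ℕ} (hinj : Set.InjOn v (Set.Iio N))
    (hadj : ∀ i, i + 1 < N → G.Adj (v i) (v (i + 1))) (hR : 0 < R) (haN : a + R ^ D ≤ N) :
    HasHierarchy G (fun _ => True) R D (v '' Set.Ico a (a + R ^ D)) := by
  have hpow : ∀ D, 0 < R ^ D := fun _ => Nat.pow_pos hR
  have hconn {D a : ℕ} (h : a + R ^ D ≤ N) : (G.induce (v '' Set.Ico a (a + R ^ D))).Connected :=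
    connected_induce_image_Ico (Nat.lt_add_of_pos_right (hpow D)) fun i hi =>
      hadj i (hi.trans_le h)
  induction D generalizing a with
  | zero => exact ⟨hconn haN, trivial⟩
  | succ D ih =>
    have hle (i : Fin R) : a + (i + 1) * R ^ D ≤ a + R ^ (D + 1) := by
      rw [pow_succ']
      exact Nat.add_le_add_left (Nat.mul_le_mul_right _ i.2) a
    have hsub (i : Fin R) : Set.Ico (a + i * R ^ D) (a + (i + 1) * R ^ D) ⊆
        Set.Ico a (a + R ^ (D + 1)) := Set.Ico_subset_Ico (Nat.le_add_right _ _) (hle i)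
    have hsubN : Set.Ico a (a + R ^ (D + 1)) ⊆ Set.Iio N := fun i hi => hi.2.trans_le haN
    have hdisj := Monotone.pairwise_disjoint_on_Ico_succ (f := fun i : ℕ => a + i * R ^ D)
      fun i j hij => Nat.add_le_add_left (Nat.mul_le_mul_right _ hij) a
    refine ⟨hconn haN, fun i => v '' Set.Ico (a + i * R ^ D) (a + (i + 1) * R ^ D),
      fun i => Set.image_mono (hsub i), fun i j hij => ?_, fun i => ?_⟩
    · exact (hdisj (Fin.val_injective.ne hij)).image hinj ((hsub i).trans hsubN)
        ((hsub j).trans hsubN)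
    · have hstep : a + (i + 1) * R ^ D = a + i * R ^ D + R ^ D := by ring
      have hi := hle i
      rw [hstep] at hi
      simpa only [hstep] using ih (hi.trans haN)

lemma HasPathOfOrder.exists_hasHierarchy {n : ℕ} (hG : HasPathOfOrder G n) (hR : 0 < R)
    (hn : R ^ D ≤ n) : ∃ Q, HasHierarchy G (fun _ => True) R D Q := by
  obtain ⟨u, v, p, hp, rfl⟩ := hG
  refine ⟨_, hasHierarchy_image_Ico (v := p.getVert) (a := 0) (N := p.length + 1) ?_ ?_ hR
    (by rwa [zero_add])⟩
  · exact hp.getVert_injOn.mono fun i hi => Nat.le_of_lt_succ hi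
  · exact fun i hi => p.adj_getVert_succ (Nat.lt_of_succ_lt_succ hi)

end Hierarchies

section Inseparability

variable {V : Type u} {G H : SimpleGraph V} {p : Set V → Prop} {L M R R' D : ℕ} {T U : Set V}

/-- `x` cannot be separated from `Q` by fewer than `M` vertices other than `x`. -/
def Unseparated (G : SimpleGraph V) (M : ℕ) (x : V) (Q : Set V) : Prop :=
  ∀ S : Finset V, S.card < M → x ∉ S → ∃ q ∈ Q, (edgesWithin G (↑S)ᶜ).Reachable x q

/-- No two vertices of `X` can be separated by fewer than `M` other vertices. -/
def IsInseparable (G : SimpleGraph V) (M : ℕ) (X : Finset V) : Prop :=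
  ∀ x ∈ X, ∀ y ∈ X, ∀ S : Finset V, S.card < M → x ∉ S → y ∉ S →
    (edgesWithin G (↑S)ᶜ).Reachable x y

lemma monotone_unseparated (G : SimpleGraph V) (M : ℕ) (x : V) : Monotone (Unseparated G M x) :=
  fun _ _ hQ hx S hS hxS => (hx S hS hxS).imp fun _ hq => ⟨hQ hq.1, hq.2⟩

lemma HasHierarchy.isInseparable {X : Finset V} {Q : Set V}
    (h : HasHierarchy G (fun T => ∀ x ∈ X, Unseparated G M x T) M 1 Q) : IsInseparable G M X := by
  intro x hx y hy S hS hxS hyS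
  obtain ⟨T, hTS, hT⟩ := h.exists_child_subset_compl hS
  obtain ⟨q, hq, hxq⟩ := hT.2 x hx S hS hxS
  obtain ⟨q', hq', hyq'⟩ := hT.2 y hy S hS hyS
  exact (hxq.trans (reachable_edgesWithin_of_connected hT.connected hTS hq hq')).trans hyq'.symm

/-- Every vertex of `T` is closer by at least `i` to some vertex of `S` than to `r`, in the
component of `r`. Vertices of `S` that fail to be separated from `T` by small sets are found by
replacing `S` with separators, which increases `i`. -/
structure IsFrontier (H : SimpleGraph V) (r : V) (i : ℕ) (S : Finset V) (T : Set V) : Prop where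
  reachable {s} : s ∈ S → H.Reachable r s
  exists_dist_add_le {q} : q ∈ T → ∃ s ∈ S, H.Reachable s q ∧ H.dist s q + i ≤ H.dist r q

lemma exists_dist_lt_of_separator (hHG : H ≤ G) {Z : Set V} {s q : V} (hs : s ∉ Z)
    (hZ : ¬ (edgesWithin G Zᶜ).Reachable s q) (hsq : H.Reachable s q) :
    ∃ u ∈ Z, H.Reachable u q ∧ H.dist u q < H.dist s q := by
  classical
  obtain ⟨w, hw⟩ := hsq.exists_walk_length_eq_dist
  obtain ⟨u, huw, huZ⟩ : ∃ u ∈ w.support, u ∈ Z := by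
    by_contra! h
    exact hZ (reachable_edgesWithin_of_support_subset hHG w h)
  refine ⟨u, huZ, ⟨w.dropUntil u huw⟩, (dist_le (w.dropUntil u huw)).trans_lt ?_⟩
  rw [← hw]
  exact Walk.length_dropUntil_lt_length huw fun h => hs (h ▸ huZ)

namespace IsFrontier

variable {r : V} {i : ℕ} {S : Finset V}

lemma nonempty (h : IsFrontier H r i S T) (hT : T.Nonempty) : S.Nonempty := by
  obtain ⟨q, hq⟩ := hT
  obtain ⟨s, hs, -⟩ := h.exists_dist_add_le hq
  exact ⟨s, hs⟩

lemma exists_succ (hHG : H ≤ G) (h : IsFrontier H r i S T) (hUT : U ⊆ T)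
    (hsep : ∀ s ∈ S, ¬ Unseparated G M s U) :
    ∃ S', S'.card ≤ S.card * M ∧ IsFrontier H r (i + 1) S' U := by
  classical
  have hsep' : ∀ s : S, ∃ Z : Finset V, Z.card < M ∧ (s : V) ∉ Z ∧
      ∀ q ∈ U, ¬ (edgesWithin G (↑Z)ᶜ).Reachable s q := by
    intro s
    simpa [Unseparated] using hsep s s.2
  choose Z hZcard hsZ hZ using hsep'
  refine ⟨(S.attach.biUnion Z).filter (H.Reachable r), ?_, fun hu => (Finset.mem_filter.1 hu).2,
    fun {q} hq => ?_⟩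
  · calc _ ≤ (S.attach.biUnion Z).card := Finset.card_filter_le _ _
      _ ≤ S.attach.card * M := Finset.card_biUnion_le_card_mul _ _ _ fun s _ => (hZcard s).le
      _ = S.card * M := by rw [Finset.card_attach]
  · obtain ⟨s, hs, hsq, hdist⟩ := h.exists_dist_add_le (hUT hq)
    obtain ⟨u, huZ, huq, hlt⟩ :=
      exists_dist_lt_of_separator (s := s) hHG (hsZ ⟨s, hs⟩) (hZ ⟨s, hs⟩ q hq) hsq
    refine ⟨u, Finset.mem_filter.2 ⟨?_, ?_⟩, huq, by omega⟩
    · exact Finset.mem_biUnion.2 ⟨⟨s, hs⟩, Finset.mem_attach _ _, huZ⟩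
    · exact ((h.reachable hs).trans hsq).trans huq.symm

theorem exists_hasHierarchy_unseparated (hHG : H ≤ G) (hp : Monotone p) (hM : 0 < M) (hR' : 0 < R')
    (hR : M ^ L * R' ≤ R) {j : ℕ} (hij : i + j = L) (hS : S.card ≤ M ^ i)
    (h : IsFrontier H r i S T) (hdist : ∀ q ∈ T, H.dist r q < L)
    (hT : HasHierarchy G p R (j * D) T) :
    ∃ x, H.Reachable r x ∧
      ∃ Q, HasHierarchy G (fun U => p U ∧ Unseparated G M x U) R' D Q := by
  classical
  induction j generalizing i S T with
  | zero =>
    obtain ⟨q, hq⟩ := hT.nonempty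
    obtain ⟨s, -, -, hsq⟩ := h.exists_dist_add_le hq
    have := hdist q hq
    omega
  | succ j ih =>
    rw [Nat.succ_mul] at hT
    by_cases hU : ∃ U ⊆ T, HasHierarchy G p R (j * D) U ∧ ∀ s ∈ S, ¬ Unseparated G M s U
    · obtain ⟨U, hUT, hU, hsep⟩ := hU
      obtain ⟨S', hS', hfrontier⟩ := h.exists_succ hHG hUT hsep
      exact ih (by omega) (hS'.trans (Nat.mul_le_mul_right M hS)) hfrontier
        (fun q hq => hdist q (hUT hq)) hU
    · push Not at hU
      have hSR : S.card * R' ≤ R :=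
        (Nat.mul_le_mul_right R' (hS.trans (Nat.pow_le_pow_right hM (by omega)))).trans hR
      obtain ⟨s, hs, hTs⟩ := hT.split.exists_monochromatic (h.nonempty hT.nonempty) hSR hU
      have hRpos : 0 < R := (Nat.mul_pos (Nat.pow_pos hM) hR').trans_le hR
      exact ⟨s, h.reachable hs, T, hTs.mono fun U hU => ⟨hU.1.of_monotone hp hRpos, hU.2⟩⟩

end IsFrontier

theorem HasHierarchy.exists_unseparated (hL : InducedPathOrderLE G L) (hp : Monotone p)
    (hM : 0 < M) (hR' : 0 < R') (hR : M ^ L * R' ≤ R) {X : Finset V} (hX : X.card < R) {Q : Set V}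
    (hQ : HasHierarchy G p R (L * D + 1) Q) :
    ∃ x ∉ X, ∃ Q, HasHierarchy G (fun U => p U ∧ Unseparated G M x U) R' D Q := by
  obtain ⟨T, hTX, hT⟩ := hQ.exists_child_subset_compl hX
  obtain ⟨r, hr⟩ := hT.nonempty
  have hreach {q : V} (hq : q ∈ T) : (edgesWithin G (↑X)ᶜ).Reachable r q :=
    reachable_edgesWithin_of_connected hT.connected hTX hr hq
  have hfrontier : IsFrontier (edgesWithin G (↑X)ᶜ) r 0 {r} T :=
    ⟨fun hs => by rw [Finset.mem_singleton.1 hs],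
      fun {q} hq => ⟨r, Finset.mem_singleton_self r, hreach hq, le_rfl⟩⟩
  obtain ⟨x, hrx, hx⟩ := hfrontier.exists_hasHierarchy_unseparated edgesWithin_le hp hM hR' hR
    (Nat.zero_add L) (by simp) (fun q hq => hL.dist_lt (hTX hr) (hreach hq)) hT
  exact ⟨x, mem_of_reachable_edgesWithin hrx (hTX hr), hx⟩

/-- The depth of a hierarchy from which `j` pairwise inseparable vertices can be extracted. -/
def inseparableDepth (L : ℕ) : ℕ → ℕ
  | 0 => 1
  | j + 1 => L * inseparableDepth L j + 1

theorem HasHierarchy.exists_isInseparable (hL : InducedPathOrderLE G L) {j : ℕ} {X : Finset V}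
    (hXM : X.card + j ≤ M) (hM : 0 < M) {Q : Set V}
    (hQ : HasHierarchy G (fun T => ∀ x ∈ X, Unseparated G M x T) (M ^ (L * j + 1))
      (inseparableDepth L j) Q) :
    ∃ X' : Finset V, X'.card = X.card + j ∧ IsInseparable G M X' := by
  classical
  induction j generalizing X Q with
  | zero =>
    rw [mul_zero, zero_add, pow_one] at hQ
    exact ⟨X, rfl, hQ.isInseparable⟩
  | succ j ih =>
    have hmono : Monotone fun T => ∀ x ∈ X, Unseparated G M x T :=
      fun _ _ hT h x hx => monotone_unseparated G M x hT (h x hx)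
    have hpow : M ^ L * M ^ (L * j + 1) = M ^ (L * (j + 1) + 1) := by ring
    have hXR : X.card < M ^ (L * (j + 1) + 1) := by
      have : M ≤ M ^ (L * (j + 1) + 1) := Nat.le_self_pow (Nat.succ_ne_zero _) M
      omega
    obtain ⟨x, hxX, Q', hQ'⟩ := hQ.exists_unseparated hL hmono hM (Nat.pow_pos hM) hpow.le hXR
    have hcard := Finset.card_insert_of_notMem hxX
    obtain ⟨X', hX', hinsep⟩ := ih (X := insert x X) (by omega) (hQ'.mono fun T hT =>
      Finset.forall_mem_insert _ _ _ |>.2 ⟨hT.2, hT.1⟩)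
    exact ⟨X', by omega, hinsep⟩

theorem HasPathOfOrder.exists_isInseparable (hL : InducedPathOrderLE G L) {n j : ℕ} (hM : 0 < M)
    (hj : j ≤ M) (hG : HasPathOfOrder G n) (hn : (M ^ (L * j + 1)) ^ inseparableDepth L j ≤ n) :
    ∃ X : Finset V, X.card = j ∧ IsInseparable G M X := by
  obtain ⟨Q, hQ⟩ := hG.exists_hasHierarchy (Nat.pow_pos hM) hn
  simpa using (hQ.mono (q := fun T => ∀ x ∈ (∅ : Finset V), Unseparated G M x T)
    (by simp)).exists_isInseparable hL (by simpa using hj) hM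

end Inseparability

section Degeneracy

variable {V : Type u} {G : SimpleGraph V} {k : ℕ}

namespace Degenerate

lemma exists_card_filter_adj_le [DecidableRel G.Adj] (hG : Degenerate G k) {W : Finset V}
    (hW : W.Nonempty) : ∃ v ∈ W, (W.filter (G.Adj v)).card ≤ k := by
  obtain ⟨v, hv, hvk⟩ := hG W hW
  refine ⟨v, hv, ?_⟩
  rwa [← Set.ncard_coe_finset, Finset.coe_filter]

lemma card_interedges_self_le [DecidableRel G.Adj] (hG : Degenerate G k) (W : Finset V) :
    (G.interedges W W).card ≤ 2 * k * W.card := by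
  classical
  induction W using Finset.strongInduction with | _ W ih
  obtain rfl | hW := W.eq_empty_or_nonempty
  · simp
  obtain ⟨v, hv, hvk⟩ := hG.exists_card_filter_adj_le hW
  set N := W.filter (G.Adj v)
  have hsub : G.interedges W W ⊆
      G.interedges (W.erase v) (W.erase v) ∪ (N.image (v, ·) ∪ N.image (·, v)) := by
    rintro ⟨a, b⟩ hab
    have := ((mem_interedges_iff G).1 hab).2.2.symm
    by_cases ha : a = v <;> by_cases hb : b = v <;> simp_all [mem_interedges_iff, N]
  have hcard : (G.interedges W W).card ≤
      (G.interedges (W.erase v) (W.erase v)).card + (N.card + N.card) :=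
    (Finset.card_le_card hsub).trans <| (Finset.card_union_le _ _).trans <|
      Nat.add_le_add_left ((Finset.card_union_le _ _).trans
        (Nat.add_le_add Finset.card_image_le Finset.card_image_le)) _
  have := ih _ (Finset.erase_ssubset hv)
  rw [← Finset.card_erase_add_one hv]
  linarith

lemma card_touching_pairs_le {ι : Type*} (hG : Degenerate G k) {A : ι → Finset V}
    (hA : Pairwise fun i j => Disjoint (A i) (A j)) {W : Finset V} (hW : ∀ i, A i ⊆ W)
    {P : Finset (ι × ι)} (hP : ∀ q ∈ P, ∃ u ∈ A q.1, ∃ v ∈ A q.2, G.Adj u v) :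
    P.card ≤ 2 * k * W.card := by
  classical
  have hindex {i j v} (hi : v ∈ A i) (hj : v ∈ A j) : i = j := by
    by_contra hij
    exact Finset.disjoint_left.1 (hA hij) hi hj
  refine (Finset.card_le_card_of_forall_subsingleton (fun q e => e.1 ∈ A q.1 ∧ e.2 ∈ A q.2)
    (fun q hq => ?_) fun e _ q hq q' hq' => ?_).trans (hG.card_interedges_self_le W)
  · obtain ⟨u, hu, v, hv, huv⟩ := hP q hq
    exact ⟨(u, v), (mem_interedges_iff G).2 ⟨hW _ hu, hW _ hv, huv⟩, hu, hv⟩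
  · exact Prod.ext (hindex hq.2.1 hq'.2.1) (hindex hq.2.2 hq'.2.2)

lemma exists_anticomplete_pair {ι : Type*} [Fintype ι] (hG : Degenerate G k) {L : ℕ}
    (hι : 2 * k * L + 1 < Fintype.card ι) {A : ι → Finset V}
    (hA : Pairwise fun i j => Disjoint (A i) (A j)) (hcard : ∀ i, (A i).card ≤ L) :
    ∃ i j, i ≠ j ∧ ∀ u ∈ A i, ∀ v ∈ A j, ¬ G.Adj u v := by
  classical
  by_contra! htouch
  have hpairs : Fintype.card ι * (Fintype.card ι - 1) ≤ Fintype.card ι * (2 * k * L) :=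
    calc Fintype.card ι * (Fintype.card ι - 1)
        = (Finset.univ : Finset ι).offDiag.card := by
          rw [Finset.offDiag_card, Finset.card_univ, Nat.mul_sub_one]
      _ ≤ 2 * k * (Finset.univ.biUnion A).card :=
          hG.card_touching_pairs_le hA (fun i => Finset.subset_biUnion_of_mem A (Finset.mem_univ i))
            fun q hq => htouch q.1 q.2 (Finset.mem_offDiag.1 hq).2.2
      _ ≤ 2 * k * (Fintype.card ι * L) :=
          Nat.mul_le_mul_left _ (Finset.card_biUnion_le_card_mul _ _ _ fun i _ => hcard i)
      _ = Fintype.card ι * (2 * k * L) := by ring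
  have := Nat.le_of_mul_le_mul_left hpairs (by omega)
  omega

lemma exists_isIndepSet (hG : Degenerate G k) {t : ℕ} {X : Finset V}
    (hX : (k + 1) * t ≤ X.card) : ∃ Y ⊆ X, Y.card = t ∧ G.IsIndepSet Y := by
  classical
  induction t generalizing X with
  | zero => exact ⟨∅, by simp⟩
  | succ t ih =>
    rw [mul_add_one] at hX
    obtain ⟨v, hv, hvk⟩ := hG.exists_card_filter_adj_le (Finset.card_pos.1 (by omega : 0 < X.card))
    set N := X.filter (G.Adj v)
    have hcard : X.card ≤ (X \ insert v N).card + (k + 1) :=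
      Finset.card_le_card_sdiff_add_card.trans
        (Nat.add_le_add_left ((Finset.card_insert_le v N).trans (Nat.succ_le_succ hvk)) _)
    obtain ⟨Y, hYX, hYcard, hY⟩ := ih (by omega : (k + 1) * t ≤ (X \ insert v N).card)
    have hvY : v ∉ Y := fun h => by simpa using hYX h
    refine ⟨insert v Y, Finset.insert_subset hv (hYX.trans Finset.sdiff_subset),
      by rw [Finset.card_insert_of_notMem hvY, hYcard], ?_⟩
    rw [Finset.coe_insert, ← isClique_compl, isClique_insert, isClique_compl]
    refine ⟨hY, fun y hy hne => (compl_adj G v y).2 ⟨hne, fun hvy => ?_⟩⟩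
    obtain ⟨hyX, hyN⟩ := Finset.mem_sdiff.1 (hYX hy)
    exact hyN (Finset.mem_insert_of_mem (Finset.mem_filter.2 ⟨hyX, hvy⟩))

end Degenerate

end Degeneracy

section Links

variable {V : Type u} {G : SimpleGraph V} {A A' X : Finset V} {x y : V} {ℓ L M : ℕ}

/-- `A` links `x` and `y`: they are joined by a walk whose vertices other than `x` and `y`
all lie in `A`. -/
def Links (G : SimpleGraph V) (A : Finset V) (x y : V) : Prop :=
  (edgesWithin G ({x, y} ∪ ↑A)).Reachable x y

lemma Links.symm (h : Links G A x y) : Links G A y x := by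
  unfold Links
  rw [Set.pair_comm]
  exact Reachable.symm h

lemma Links.exists_adj (h : Links G A x y) (hxy : x ≠ y) (hadj : ¬ G.Adj x y) :
    ∃ a ∈ A, G.Adj x a ∧ (edgesWithin G ({y} ∪ ↑A)).Reachable a y := by
  obtain ⟨p, hp⟩ := h.exists_isPath
  cases p with
  | nil => exact absurd rfl hxy
  | @cons _ a _ hxa q =>
    have hx : x ∉ q.support := (Walk.cons_isPath_iff hxa q).1 hp |>.2
    have hq : ∀ v ∈ q.support, v ∈ {y} ∪ (A : Set V) := fun v hv => by
      classical
      have := mem_of_reachable_edgesWithin ⟨q.takeUntil v hv⟩ hxa.2.1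
      have : v ≠ x := fun h => hx (h ▸ hv)
      simp_all
    have hxa' : G.Adj x a := hxa.2.2
    have ha := hq a q.start_mem_support
    rcases ha with rfl | ha
    · exact absurd hxa' hadj
    · exact ⟨a, ha, hxa', reachable_edgesWithin_of_support_subset edgesWithin_le q hq⟩

theorem IsInseparable.exists_links (hX : IsInseparable G M X) (hL : InducedPathOrderLE G L)
    (hx : x ∈ X) (hy : y ∈ X) {T : Finset V} (hT : T.card < M) :
    ∃ A, Links G A x y ∧ A.card ≤ L ∧ Disjoint A T := by
  classical
  have hxT : x ∉ T \ {x, y} := by simp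
  have hyT : y ∉ T \ {x, y} := by simp
  have hxy := hX x hx y hy _ ((Finset.card_le_card Finset.sdiff_subset).trans_lt hT) hxT hyT
  obtain ⟨p, hp⟩ := hxy.exists_walk_length_eq_dist
  refine ⟨p.support.toFinset \ T, ?_, ?_, Finset.sdiff_disjoint⟩
  · refine reachable_edgesWithin_of_support_subset edgesWithin_le p fun v hv => ?_
    have := mem_of_reachable_edgesWithin ⟨p.takeUntil v hv⟩ hxT
    simp_all
    tauto
  · calc (p.support.toFinset \ T).card ≤ p.support.toFinset.card :=
          Finset.card_le_card Finset.sdiff_subset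
      _ ≤ p.support.length := List.toFinset_card_le _
      _ = (edgesWithin G (↑(T \ {x, y}))ᶜ).dist x y + 1 := by rw [Walk.length_support, hp]
      _ ≤ L := hL.dist_lt hxT hxy

lemma exists_pairwiseDisjoint_of_forall_exists_disjoint {ι : Type*} {p : ι → Finset V → Prop}
    (hp : ∀ i T, T.card ≤ M → ∃ A, p i A ∧ A.card ≤ L ∧ Disjoint A T) (I : Finset ι)
    (hI : I.card * L ≤ M) :
    ∃ A : ι → Finset V, (∀ i ∈ I, p i (A i) ∧ (A i).card ≤ L) ∧
      (I : Set ι).PairwiseDisjoint A := by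
  classical
  induction I using Finset.induction_on with
  | empty => exact ⟨fun _ => ∅, by simp⟩
  | insert t I ht ih =>
    rw [Finset.card_insert_of_notMem ht, Nat.succ_mul] at hI
    obtain ⟨A, hA, hdisj⟩ := ih (by omega)
    obtain ⟨B, hB, hBcard, hBA⟩ := hp t (I.biUnion A)
      ((Finset.card_biUnion_le_card_mul _ _ _ fun i hi => (hA i hi).2).trans (by omega))
    have hupd : ∀ i ∈ I, Function.update A t B i = A i := fun i hi =>
      Function.update_of_ne (ne_of_mem_of_not_mem hi ht) _ _
    refine ⟨Function.update A t B, ?_, ?_⟩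
    · rw [Finset.forall_mem_insert, Function.update_self]
      exact ⟨⟨hB, hBcard⟩, fun i hi => by rw [hupd i hi]; exact hA i hi⟩
    · rw [Finset.coe_insert, Set.pairwiseDisjoint_insert_of_notMem ht, Function.update_self]
      refine ⟨fun i hi j hj hij => ?_, fun i hi => ?_⟩
      · simpa only [Function.onFun, hupd i hi, hupd j hj] using hdisj hi hj hij
      · rw [hupd i hi]
        exact (Finset.disjoint_biUnion_right _ _ _).1 hBA i hi

theorem IsInseparable.exists_pairwise_disjoint_links {ι : Type*} [Fintype ι]
    (hX : IsInseparable G M X) (hL : InducedPathOrderLE G L) {x y : ι → V} (hx : ∀ i, x i ∈ X)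
    (hy : ∀ i, y i ∈ X) (hM : X.card + Fintype.card ι * L < M) :
    ∃ A : ι → Finset V, (∀ i, Links G (A i) (x i) (y i) ∧ Disjoint (A i) X ∧ (A i).card ≤ L) ∧
      Pairwise fun i j => Disjoint (A i) (A j) := by
  classical
  obtain ⟨A, hA, hdisj⟩ := exists_pairwiseDisjoint_of_forall_exists_disjoint
    (p := fun i A => Links G A (x i) (y i) ∧ Disjoint A X) (fun i T hT => by
      obtain ⟨A, hA, hcard, hAT⟩ := hX.exists_links hL (hx i) (hy i)
        (((Finset.card_union_le X T).trans (Nat.add_le_add_left hT _)).trans_lt hM)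
      rw [Finset.disjoint_union_right] at hAT
      exact ⟨A, ⟨hA, hAT.1⟩, hcard, hAT.2⟩) Finset.univ (by rw [Finset.card_univ])
  refine ⟨A, fun i => ?_, fun i j hij => hdisj (by simp) (by simp) hij⟩
  simpa only [and_assoc] using hA i (Finset.mem_univ i)

lemma isLayering_of_pathGraph_embedding {d : ℕ} (φ : pathGraph (d + 1) ↪g G) {A : Set V}
    (hφA : ∀ i, φ i ∉ A) (hadj : ∀ i, ∀ v ∈ A, G.Adj (φ i) v → i = 0 ∨ i = Fin.last d) :
    IsLayering G (fun n => {v | (∃ i, i.val = n + 1 ∧ φ i = v) ∨ n = d ∧ v ∈ A}) d where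
  eq_of_mem {m n v} _ _ hm hn := by
    rcases hm with ⟨i, hi, rfl⟩ | ⟨rfl, hv⟩ <;> rcases hn with ⟨j, hj, hij⟩ | ⟨rfl, hv'⟩
    · have := congrArg Fin.val (φ.injective hij)
      omega
    · exact absurd hv' (hφA i)
    · exact absurd (hij ▸ hv) (hφA j)
    · rfl
  le_succ_of_adj {m n u v} _ hnd hm hn huv := by
    rcases hm with ⟨i, hi, rfl⟩ | ⟨rfl, -⟩
    · rcases hn with ⟨j, hj, rfl⟩ | ⟨rfl, hv⟩
      · have := pathGraph_adj.1 (φ.map_adj_iff.1 huv)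
        omega
      · rcases hadj i v hv huv with rfl | rfl
        · exact absurd hi.symm (Nat.succ_ne_zero m)
        · exact hi.le
    · exact hnd.trans m.le_succ

theorem add_two_lt_of_pathGraph_embedding (hG : InducedCycleOrderLT G ℓ) {d : ℕ} (hd : 0 < d)
    (φ : pathGraph (d + 1) ↪g G) {A : Set V} (hφA : ∀ i, φ i ∉ A)
    (hadj : ∀ i, ∀ v ∈ A, G.Adj (φ i) v → i = 0 ∨ i = Fin.last d) {b : V} (hbA : b ∈ A)
    (hb : G.Adj (φ 0) b)
    (hA : (edgesWithin G ({φ (Fin.last d)} ∪ A)).Reachable b (φ (Fin.last d))) :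
    d + 2 < ℓ := by
  obtain ⟨d, rfl⟩ := Nat.exists_eq_succ_of_ne_zero hd.ne'
  set U : Set V := ⋃ n ≤ d + 1, {v | (∃ i, i.val = n + 1 ∧ φ i = v) ∨ n = d + 1 ∧ v ∈ A}
  have hAU : A ⊆ U := fun v hv => Set.mem_iUnion₂.2 ⟨d + 1, le_rfl, .inr ⟨rfl, hv⟩⟩
  have hφU (i : Fin (d + 1)) : φ i.succ ∈ U :=
    Set.mem_iUnion₂.2 ⟨i, by omega, .inl ⟨i.succ, i.val_succ, rfl⟩⟩
  have hφreach : (edgesWithin G U).Reachable (φ (Fin.succ 0)) (φ (Fin.last d).succ) :=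
    ((pathGraph_connected d) 0 (Fin.last d)).map
      (⟨fun i => φ i.succ, fun {i j} hij => ⟨hφU i, hφU j, φ.map_adj_iff.2 <| by
        rw [pathGraph_adj] at hij ⊢
        simpa using hij⟩⟩ : pathGraph (d + 1) →g edgesWithin G U)
  have hbreach := hA.mono (edgesWithin_mono
    (Set.union_subset (Set.singleton_subset_iff.2 (hφU (Fin.last d))) hAU))
  refine (isLayering_of_pathGraph_embedding φ hφA hadj).add_two_lt_of_inducedCycleOrderLT hG hd
    ?_ ?_ (.inl ⟨Fin.succ 0, rfl, rfl⟩) (φ.map_adj_iff.2 (by simp [pathGraph_adj]))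
    (.inr ⟨rfl, hbA⟩) hb (hφreach.trans hbreach.symm)
  · rintro n - (⟨i, hi, hi0⟩ | ⟨-, hA⟩)
    · have := congrArg Fin.val (φ.injective hi0)
      simp [hi] at this
    · exact hφA 0 hA
  · rintro n - v (⟨i, hi, rfl⟩ | ⟨rfl, -⟩) h0v
    · have := pathGraph_adj.1 (φ.map_adj_iff.1 h0v)
      simp only [Fin.val_zero] at this
      omega
    · exact .inr rfl

theorem Links.dist_add_two_lt (hG : InducedCycleOrderLT G ℓ) (hxy : x ≠ y) (hadj : ¬ G.Adj x y)
    (hA : Links G A x y) (hA' : Links G A' x y) (hxA' : x ∉ A') (hyA' : y ∉ A')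
    (hdisj : Disjoint A A') (hanti : ∀ u ∈ A, ∀ v ∈ A', ¬ G.Adj u v) :
    (edgesWithin G ({x, y} ∪ ↑A)).dist x y + 2 < ℓ := by
  obtain ⟨p, hp⟩ := Reachable.exists_walk_length_eq_dist hA
  obtain ⟨φ, hφ⟩ := exists_pathGraph_embedding_of_length_eq_dist (by simp) hp
  have hφ0 : φ 0 = x := by simp [(hφ 0).1]
  have hφlast : φ (Fin.last p.length) = y := by simp [(hφ _).1]
  have hφA (i) (h0 : i ≠ 0) (hlast : i ≠ Fin.last p.length) : φ i ∈ A := by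
    have hx : φ i ≠ x := fun h => h0 (φ.injective (h.trans hφ0.symm))
    have hy : φ i ≠ y := fun h => hlast (φ.injective (h.trans hφlast.symm))
    have := (hφ i).2
    simp_all
  have hφA' (i) : φ i ∉ A' := by
    rcases eq_or_ne i 0 with rfl | h0
    · rwa [hφ0]
    rcases eq_or_ne i (Fin.last p.length) with rfl | hlast
    · rwa [hφlast]
    · exact Finset.disjoint_left.1 hdisj (hφA i h0 hlast)
  obtain ⟨b, hbA', hxb, hby⟩ := hA'.exists_adj hxy hadj
  rw [← hp]
  refine add_two_lt_of_pathGraph_embedding hG (hp ▸ Reachable.pos_dist_of_ne hA hxy) φ hφA'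
    (fun i v hv hiv => ?_) hbA' (by rwa [hφ0]) (by rwa [hφlast])
  by_contra! h
  exact hanti _ (hφA i h.1 h.2) v hv hiv

theorem Links.exists_subset_card_le (hG : InducedCycleOrderLT G ℓ) (hadj : ¬ G.Adj x y)
    (hA : Links G A x y) (hA' : Links G A' x y) (hxA' : x ∉ A') (hyA' : y ∉ A')
    (hdisj : Disjoint A A') (hanti : ∀ u ∈ A, ∀ v ∈ A', ¬ G.Adj u v) :
    ∃ B ⊆ A, Links G B x y ∧ B.card ≤ ℓ := by
  classical
  rcases eq_or_ne x y with rfl | hxy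
  · exact ⟨∅, A.empty_subset, Reachable.refl x, ℓ.zero_le⟩
  have hdist := hA.dist_add_two_lt hG hxy hadj hA' hxA' hyA' hdisj hanti
  obtain ⟨p, hp⟩ := Reachable.exists_walk_length_eq_dist hA
  refine ⟨A ∩ p.support.toFinset, Finset.inter_subset_left, ?_, ?_⟩
  · refine reachable_edgesWithin_of_support_subset edgesWithin_le p fun v hv => ?_
    have := mem_of_reachable_edgesWithin ⟨p.takeUntil v hv⟩ (by simp)
    simp_all
  · calc (A ∩ p.support.toFinset).card ≤ p.support.toFinset.card :=
          Finset.card_le_card Finset.inter_subset_right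
      _ ≤ p.support.length := List.toFinset_card_le _
      _ ≤ ℓ := by rw [Walk.length_support, hp]; omega

end Links

section LinkCycles

variable {V : Type u} {G : SimpleGraph V} {s ℓ : ℕ} {x : ℕ → V} {A : ℕ → Finset V}

/-- The pairwise nonadjacent vertices `x 0, …, x (s - 1)` are linked cyclically by the pairwise
disjoint and anticomplete sets `A 0, …, A (s - 1)`, where `A t` links `x t` and `x (t + 1)`
and the vertex following `x (s - 1)` is `x s = x 0`. -/
structure IsLinkCycle (G : SimpleGraph V) (s : ℕ) (x : ℕ → V) (A : ℕ → Finset V) : Prop where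
  closed : x s = x 0
  injOn : Set.InjOn x (Set.Iio s)
  notMem {t t'} : t < s → t' < s → x t ∉ A t'
  disjoint {t t'} : t < s → t' < s → t ≠ t' → Disjoint (A t) (A t')
  links {t} : t < s → Links G (A t) (x t) (x (t + 1))
  not_adj {t t'} : t < s → t' < s → ¬ G.Adj (x t) (x t')
  anticomplete {t t' u v} : t < s → t' < s → t ≠ t' → u ∈ A t → v ∈ A t' → ¬ G.Adj u v
  eq_or_eq_succ_of_adj {t t' v} : t < s → t' < s → v ∈ A t' → G.Adj (x t) v →
    x t = x t' ∨ x t = x (t' + 1)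

/-- The layering `A 0, {x 1}, A 1, {x 2}, …, A (s - 1)` of a cycle of links without `x 0`. -/
def linkLayer (s : ℕ) (x : ℕ → V) (A : ℕ → Finset V) (i : ℕ) : Set V :=
  {v | (∃ t < s, i = 2 * t ∧ v ∈ A t) ∨ ∃ t < s, i + 1 = 2 * t ∧ v = x t}

namespace IsLinkCycle

lemma eq_of_mem (h : IsLinkCycle G s x A) {t t' : ℕ} {v : V} (ht : t < s) (ht' : t' < s)
    (hv : v ∈ A t) (hv' : v ∈ A t') : t = t' := by
  by_contra hne
  exact Finset.disjoint_left.1 (h.disjoint ht ht' hne) hv hv'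

lemma eq_or_eq_succ_or_of_adj (h : IsLinkCycle G s x A) {t t' : ℕ} {v : V} (ht : t < s)
    (ht' : t' < s) (hv : v ∈ A t') (hadj : G.Adj (x t) v) :
    t = t' ∨ t = t' + 1 ∨ t = 0 ∧ t' + 1 = s := by
  rcases h.eq_or_eq_succ_of_adj ht ht' hv hadj with heq | heq
  · exact .inl (h.injOn ht ht' heq)
  · rcases Nat.lt_or_ge (t' + 1) s with hlt | hge
    · exact .inr (.inl (h.injOn ht hlt heq))
    · have hs : t' + 1 = s := by omega
      rw [hs, h.closed] at heq
      exact .inr (.inr ⟨h.injOn ht (Nat.zero_lt_of_lt ht) heq, hs⟩)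

lemma isLayering (h : IsLinkCycle G s x A) (D : ℕ) : IsLayering G (linkLayer s x A) D where
  eq_of_mem {i j v} _ _ hi hj := by
    rcases hi with ⟨t, ht, hit, hv⟩ | ⟨t, ht, hit, rfl⟩ <;>
      rcases hj with ⟨t', ht', hjt, hv'⟩ | ⟨t', ht', hjt, hv'⟩
    · have := h.eq_of_mem ht ht' hv hv'
      omega
    · exact absurd (hv' ▸ hv) (h.notMem ht' ht)
    · exact absurd hv' (h.notMem ht ht')
    · have := h.injOn ht ht' hv'
      omega
  le_succ_of_adj {i j u v} _ _ hi hj huv := by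
    rcases hi with ⟨t, ht, hit, hu⟩ | ⟨t, ht, hit, rfl⟩ <;>
      rcases hj with ⟨t', ht', hjt, hv⟩ | ⟨t', ht', hjt, rfl⟩
    · have : t = t' := by
        by_contra hne
        exact h.anticomplete ht ht' hne hu hv huv
      omega
    · have := h.eq_or_eq_succ_or_of_adj ht' ht hu huv.symm
      omega
    · have := h.eq_or_eq_succ_or_of_adj ht ht' hv huv
      omega
    · exact absurd huv (h.not_adj ht ht')

lemma reachable (h : IsLinkCycle G s x A) {U : Set V} (hxU : ∀ t, 0 < t → t < s → x t ∈ U)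
    (hAU : ∀ t < s, ↑(A t) ⊆ U) {t : ℕ} (ht : t + 1 < s) :
    (edgesWithin G U).Reachable (x 1) (x (t + 1)) := by
  induction t with
  | zero => rfl
  | succ t ih =>
    refine (ih (by omega)).trans ((h.links (by omega : t + 1 < s)).mono (edgesWithin_mono ?_))
    exact Set.union_subset (Set.pair_subset (hxU _ (by omega) (by omega)) (hxU _ (by omega) ht))
      (hAU _ (by omega))

theorem two_mul_lt (h : IsLinkCycle G s x A) (hs : 2 ≤ s) (hG : InducedCycleOrderLT G ℓ) :
    2 * s < ℓ := by
  obtain ⟨s, rfl⟩ := Nat.exists_eq_add_of_le' hs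
  set U : Set V := ⋃ i ≤ 2 * (s + 1), linkLayer (s + 2) x A i
  have hxU (t) (h0 : 0 < t) (ht : t < s + 2) : x t ∈ U :=
    Set.mem_iUnion₂.2 ⟨2 * t - 1, by omega, .inr ⟨t, ht, by omega, rfl⟩⟩
  have hAU (t) (ht : t < s + 2) : ↑(A t) ⊆ U := fun v hv =>
    Set.mem_iUnion₂.2 ⟨2 * t, by omega, .inl ⟨t, ht, rfl, hv⟩⟩
  have hne {t} (h0 : 0 < t) (ht : t < s + 2) : x t ≠ x 0 := fun heq =>
    h0.ne' (h.injOn ht (Nat.succ_pos _) heq)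
  obtain ⟨a, ha, hxa, ha1⟩ := (h.links (Nat.succ_pos _)).exists_adj
    (hne (by omega) (by omega)).symm (h.not_adj (by omega) (by omega))
  have hlast := (h.links (Nat.lt_succ_self (s + 1))).symm
  rw [h.closed] at hlast
  obtain ⟨b, hb, hxb, hb1⟩ := hlast.exists_adj (hne (by omega) (by omega)).symm
    (h.not_adj (by omega) (by omega))
  have haU := ha1.mono (edgesWithin_mono (Set.union_subset
    (Set.singleton_subset_iff.2 (hxU _ (by omega) (by omega))) (hAU 0 (by omega))))
  have hbU := hb1.mono (edgesWithin_mono (Set.union_subset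
    (Set.singleton_subset_iff.2 (hxU _ (by omega) (by omega))) (hAU (s + 1) (by omega))))
  have hpath := haU.trans ((h.reachable hxU hAU (t := s) (by omega)).trans hbU.symm)
  suffices 2 * (s + 1) + 2 < ℓ by omega
  refine (h.isLayering _).add_two_lt_of_inducedCycleOrderLT (x := x 0) hG (by omega)
    ?_ ?_ (.inl ⟨0, by omega, rfl, ha⟩) hxa (.inl ⟨s + 1, by omega, rfl, hb⟩) hxb hpath
  · rintro i - (⟨t, ht, -, hv⟩ | ⟨t, ht, hit, heq⟩)
    · exact h.notMem (by omega) ht hv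
    · exact hne (by omega) ht heq.symm
  · rintro i hi v (⟨t, ht, rfl, hv⟩ | ⟨t, ht, -, rfl⟩) hadj
    · have := h.eq_or_eq_succ_or_of_adj (by omega) ht hv hadj
      omega
    · exact absurd hadj (h.not_adj (by omega) ht)

end IsLinkCycle

end LinkCycles

section Avoidance

variable {ι κ α : Type*} [Fintype ι] [Fintype κ] [Fintype α]

lemma card_filter_comp_mem_mul_le [DecidableEq ι] [DecidableEq α] (P : Finset (κ → α)) (σ : κ ↪ ι) :
    (Finset.univ.filter fun f : ι → α => f ∘ σ ∈ P).card * Fintype.card α ^ Fintype.card κ ≤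
      P.card * Fintype.card α ^ Fintype.card ι := by
  classical
  rw [← Fintype.card_fun, ← Fintype.card_fun, ← Finset.card_univ, ← Finset.card_univ,
    ← Finset.card_product, ← Finset.card_product]
  refine Finset.card_le_card_of_injOn (fun q => (q.1 ∘ σ, Function.extend σ q.2 q.1)) ?_ ?_
  · rintro ⟨f, g⟩ hfg
    simpa using hfg
  · rintro ⟨f, g⟩ - ⟨f', g'⟩ - h
    obtain ⟨hσ, hext⟩ := Prod.mk.inj h
    refine Prod.ext (funext fun i => ?_) (funext fun j => ?_)
    · by_cases hi : ∃ j, σ j = i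
      · obtain ⟨j, rfl⟩ := hi
        exact congrFun hσ j
      · simpa only [Function.extend_apply' _ _ _ hi] using congrFun hext i
    · simpa only [σ.injective.extend_apply] using congrFun hext (σ j)

theorem exists_forall_comp_notMem [Nonempty α] {P : Finset (κ → α)}
    (hP : Fintype.card (κ ↪ ι) * P.card < Fintype.card α ^ Fintype.card κ) :
    ∃ f : ι → α, ∀ σ : κ ↪ ι, f ∘ σ ∉ P := by
  classical
  by_contra! hbad
  have hcover : (Finset.univ : Finset (ι → α)) ⊆
      Finset.univ.biUnion fun σ : κ ↪ ι => Finset.univ.filter fun f => f ∘ σ ∈ P := fun f _ => by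
    obtain ⟨σ, hσ⟩ := hbad f
    exact Finset.mem_biUnion.2 ⟨σ, Finset.mem_univ σ, Finset.mem_filter.2 ⟨Finset.mem_univ f, hσ⟩⟩
  have hpos : 0 < Fintype.card α ^ Fintype.card ι := Nat.pow_pos Fintype.card_pos
  refine (Nat.mul_lt_mul_of_pos_right hP hpos).not_ge ?_
  calc Fintype.card α ^ Fintype.card κ * Fintype.card α ^ Fintype.card ι
      = (Finset.univ : Finset (ι → α)).card * Fintype.card α ^ Fintype.card κ := by
        rw [Finset.card_univ, Fintype.card_fun, mul_comm]
    _ ≤ (∑ σ : κ ↪ ι, (Finset.univ.filter fun f : ι → α => f ∘ σ ∈ P).card) *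
          Fintype.card α ^ Fintype.card κ :=
        Nat.mul_le_mul_right _ ((Finset.card_le_card hcover).trans Finset.card_biUnion_le)
    _ ≤ ∑ _σ : κ ↪ ι, P.card * Fintype.card α ^ Fintype.card ι := by
        rw [Finset.sum_mul]
        exact Finset.sum_le_sum fun σ _ => card_filter_comp_mem_mul_le P σ
    _ = Fintype.card (κ ↪ ι) * P.card * Fintype.card α ^ Fintype.card ι := by
        rw [Finset.sum_const, Finset.card_univ, smul_eq_mul, mul_assoc]

end Avoidance

section LinkSystems

variable {V : Type u} {G : SimpleGraph V} {α : Type*} {x : α → V} {B : α × α → Finset V}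
  {k ℓ L M : ℕ}

/-- The distinct nonadjacent vertices `x a` are pairwise linked by pairwise disjoint sets
`B (a, b)` of size at most `ℓ` that contain none of them. -/
structure IsLinkSystem (G : SimpleGraph V) (ℓ : ℕ) (x : α → V) (B : α × α → Finset V) :
    Prop where
  injective : Function.Injective x
  not_adj a b : ¬ G.Adj (x a) (x b)
  card_le p : (B p).card ≤ ℓ
  notMem a p : x a ∉ B p
  disjoint : Pairwise fun p q => Disjoint (B p) (B q)
  links a b : Links G (B (a, b)) (x a) (x b)

theorem IsInseparable.exists_isLinkSystem (hG : Degenerate G k) (hℓ : InducedCycleOrderLT G ℓ)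
    (hL : InducedPathOrderLE G L) {X : Finset V} (hX : IsInseparable G M X)
    (hindep : G.IsIndepSet X) (hM : X.card + X.card * X.card * (2 * k * L + 2) * L < M) :
    ∃ B, IsLinkSystem G ℓ ((↑) : X → V) B := by
  have hadj (a b : X) : ¬ G.Adj a b := fun h => hindep a.2 b.2 h.ne h
  obtain ⟨A, hA, hAdisj⟩ := hX.exists_pairwise_disjoint_links hL
    (ι := (X × X) × Fin (2 * k * L + 2)) (fun q => q.1.1.2) (fun q => q.1.2.2) (by simpa using hM)
  have hxA (a : X) (q) : (a : V) ∉ A q := Finset.disjoint_right.1 (hA q).2.1 a.2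
  have hshort (p : X × X) : ∃ r, ∃ B ⊆ A (p, r), Links G B p.1 p.2 ∧ B.card ≤ ℓ := by
    obtain ⟨r, r', hrr', hanti⟩ := hG.exists_anticomplete_pair (A := fun r => A (p, r)) (L := L)
      (by simp) (fun r r' hrr' => hAdisj (by simpa using hrr')) fun r => (hA (p, r)).2.2
    exact ⟨r, (hA (p, r)).1.exists_subset_card_le hℓ (hadj _ _) (hA (p, r')).1 (hxA _ _) (hxA _ _)
      (hAdisj (by simpa using hrr')) hanti⟩
  choose r B hBA hB using hshort
  exact ⟨B, Subtype.val_injective, hadj, fun p => (hB p).2, fun a p h => hxA a _ (hBA p h),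
    fun p q hpq => (hAdisj (by simp [hpq])).mono (hBA p) (hBA q), fun a b => (hB (a, b)).1⟩

/-- The sets `{x a}`, indexed by `Sum.inl a`, together with the sets `B (a, b)`, indexed by
`Sum.inr (a, b)`. -/
abbrev linkPiece (x : α → V) (B : α × α → Finset V) : α ⊕ α × α → Finset V :=
  Sum.elim (fun a => {x a}) B

/-- A triple of indices that is repetitive or comes from an edge of `G` between two of the pieces
`{x a}` and `B (a, b)`. Such an edge involves up to four indices, but avoiding three of them already
avoids it, and degeneracy makes the proportion of conflicting triples small. -/
inductive IsConflict (G : SimpleGraph V) (x : α → V) (B : α × α → Finset V) : α → α → α → Prop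
  | eq (a c) : IsConflict G x B a a c
  | vertex {a b c v} (hv : v ∈ B (b, c)) (h : G.Adj (x a) v) : IsConflict G x B a b c
  | left {a b c d u v} (hu : u ∈ B (a, b)) (hv : v ∈ B (c, d)) (h : G.Adj u v) :
    IsConflict G x B a b c
  | right {a b c d u v} (hu : u ∈ B (a, b)) (hv : v ∈ B (d, c)) (h : G.Adj u v) :
    IsConflict G x B a b c

/-- The conflicting triples caused by an edge between the two pieces with the given indices. -/
def conflictTriples [DecidableEq α] :
    (α ⊕ α × α) × (α ⊕ α × α) → Finset (Fin 3 → α)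
  | (.inl a, .inr (b, c)) => {![a, b, c]}
  | (.inr (a, b), .inr (c, d)) => {![a, b, c], ![a, b, d]}
  | _ => ∅

lemma card_conflictTriples_le [DecidableEq α] (p : (α ⊕ α × α) × (α ⊕ α × α)) :
    (conflictTriples p).card ≤ 2 := by
  rcases p with ⟨_ | _, _ | _⟩
  · exact Nat.zero_le 2
  · exact (Finset.card_singleton _).trans_le one_le_two
  · exact Nat.zero_le 2
  · exact Finset.card_le_two

namespace IsLinkSystem

lemma pairwise_disjoint_pieces (h : IsLinkSystem G ℓ x B) :
    Pairwise fun p q => Disjoint (linkPiece x B p) (linkPiece x B q) := by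
  rintro (a | p) (b | q) hpq
  · simpa [h.injective.eq_iff] using hpq
  · simpa using h.notMem a q
  · simpa using h.notMem b p
  · exact h.disjoint (by simpa using hpq)

lemma card_touching_pieces_le [Fintype α] (hG : Degenerate G k) (h : IsLinkSystem G ℓ x B)
    {T : Finset ((α ⊕ α × α) × (α ⊕ α × α))}
    (hT : ∀ q ∈ T, ∃ u ∈ linkPiece x B q.1, ∃ v ∈ linkPiece x B q.2, G.Adj u v) :
    T.card ≤ 4 * k * (ℓ + 1) * Fintype.card α ^ 2 := by
  classical
  have hcard : ∀ p, (linkPiece x B p).card ≤ ℓ + 1 := by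
    rintro (a | p)
    · simp
    · exact (h.card_le p).trans ℓ.le_succ
  have hsq : Fintype.card α ≤ Fintype.card α ^ 2 := Nat.le_self_pow two_ne_zero _
  calc T.card ≤ 2 * k * (Finset.univ.biUnion (linkPiece x B)).card :=
        hG.card_touching_pairs_le h.pairwise_disjoint_pieces
          (fun p => Finset.subset_biUnion_of_mem _ (Finset.mem_univ p)) hT
    _ ≤ 2 * k * (Fintype.card (α ⊕ α × α) * (ℓ + 1)) :=
        Nat.mul_le_mul_left _ (Finset.card_biUnion_le_card_mul _ _ _ fun p _ => hcard p)
    _ = 2 * k * (ℓ + 1) * (Fintype.card α + Fintype.card α ^ 2) := by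
        rw [Fintype.card_sum, Fintype.card_prod]
        ring
    _ ≤ 2 * k * (ℓ + 1) * (Fintype.card α ^ 2 + Fintype.card α ^ 2) :=
        Nat.mul_le_mul_left _ (Nat.add_le_add_right hsq _)
    _ = 4 * k * (ℓ + 1) * Fintype.card α ^ 2 := by ring

lemma exists_card_le_of_isConflict [Fintype α] (hG : Degenerate G k) (h : IsLinkSystem G ℓ x B) :
    ∃ P : Finset (Fin 3 → α), P.card ≤ (8 * k * (ℓ + 1) + 1) * Fintype.card α ^ 2 ∧
      ∀ a b c, IsConflict G x B a b c → ![a, b, c] ∈ P := by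
  classical
  obtain ⟨T, hT⟩ : ∃ T : Finset ((α ⊕ α × α) × (α ⊕ α × α)), ∀ q, q ∈ T ↔
      ∃ u ∈ linkPiece x B q.1, ∃ v ∈ linkPiece x B q.2, G.Adj u v :=
    ⟨(Set.toFinite (Set.ofPred _)).toFinset, fun _ => Set.Finite.mem_toFinset _⟩
  have hTcard := h.card_touching_pieces_le hG fun q => (hT q).1
  refine ⟨Finset.univ.image (fun p : α × α => ![p.1, p.1, p.2]) ∪ T.biUnion conflictTriples,
    ?_, ?_⟩
  · calc _ ≤ (Finset.univ : Finset (α × α)).card + T.card * 2 :=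
          (Finset.card_union_le _ _).trans (Nat.add_le_add Finset.card_image_le
            (Finset.card_biUnion_le_card_mul _ _ _ fun p _ => card_conflictTriples_le p))
      _ ≤ Fintype.card α ^ 2 + 4 * k * (ℓ + 1) * Fintype.card α ^ 2 * 2 := by
          rw [Finset.card_univ, Fintype.card_prod, sq]
          exact Nat.add_le_add_left (Nat.mul_le_mul_right 2 (sq (Fintype.card α) ▸ hTcard)) _
      _ = (8 * k * (ℓ + 1) + 1) * Fintype.card α ^ 2 := by ring
  · have htouch {p q u v} (hu : u ∈ linkPiece x B p) (hv : v ∈ linkPiece x B q)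
        (huv : G.Adj u v) {r}
        (hr : r ∈ conflictTriples (p, q)) : r ∈ T.biUnion conflictTriples :=
      Finset.mem_biUnion.2 ⟨(p, q), (hT _).2 ⟨u, hu, v, hv, huv⟩, hr⟩
    rintro a b c (_ | ⟨hv, huv⟩ | ⟨hu, hv, huv⟩ | ⟨hu, hv, huv⟩)
    · exact Finset.mem_union_left _ (Finset.mem_image_of_mem _ (Finset.mem_univ (a, c)))
    · exact Finset.mem_union_right _ (htouch (p := .inl a) (q := .inr (b, c))
        (Finset.mem_singleton_self _) hv huv (Finset.mem_singleton_self _))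
    · exact Finset.mem_union_right _ (htouch (p := .inr (a, b)) (q := .inr (c, _)) hu hv huv
        (Finset.mem_insert_self _ _))
    · exact Finset.mem_union_right _ (htouch (p := .inr (a, b)) (q := .inr (_, c)) hu hv huv
        (Finset.mem_insert_of_mem (Finset.mem_singleton_self _)))

lemma exists_forall_not_isConflict [Fintype α] (hG : Degenerate G k) (h : IsLinkSystem G ℓ x B)
    {ι : Type*} [Fintype ι]
    (hα : Fintype.card ι ^ 3 * (8 * k * (ℓ + 1) + 1) < Fintype.card α) :
    ∃ f : ι → α, ∀ i j l, i ≠ j → i ≠ l → j ≠ l → ¬ IsConflict G x B (f i) (f j) (f l) := by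
  classical
  obtain ⟨P, hPcard, hP⟩ := h.exists_card_le_of_isConflict hG
  have hαpos : 0 < Fintype.card α := Nat.zero_lt_of_lt hα
  have : Nonempty α := Fintype.card_pos_iff.1 hαpos
  have hembed : Fintype.card (Fin 3 ↪ ι) ≤ Fintype.card ι ^ 3 := by
    rw [Fintype.card_embedding_eq, Fintype.card_fin]
    exact Nat.descFactorial_le_pow _ 3
  have hbound : Fintype.card (Fin 3 ↪ ι) * P.card < Fintype.card α ^ Fintype.card (Fin 3) :=
    calc Fintype.card (Fin 3 ↪ ι) * P.card
        ≤ Fintype.card ι ^ 3 * ((8 * k * (ℓ + 1) + 1) * Fintype.card α ^ 2) :=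
          Nat.mul_le_mul hembed hPcard
      _ = Fintype.card ι ^ 3 * (8 * k * (ℓ + 1) + 1) * Fintype.card α ^ 2 :=
          (mul_assoc _ _ _).symm
      _ < Fintype.card α * Fintype.card α ^ 2 :=
          Nat.mul_lt_mul_of_pos_right hα (Nat.pow_pos hαpos)
      _ = Fintype.card α ^ Fintype.card (Fin 3) := by rw [Fintype.card_fin]; ring
  obtain ⟨f, hf⟩ := exists_forall_comp_notMem hbound
  refine ⟨f, fun i j l hij hil hjl hconf => ?_⟩
  have hinj : Function.Injective ![i, j, l] := by
    intro a b hab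
    fin_cases a <;> fin_cases b <;> simp_all
  have hcomp : f ∘ ![i, j, l] = ![f i, f j, f l] := by
    ext a
    fin_cases a <;> rfl
  exact hf ⟨_, hinj⟩ (hcomp ▸ hP _ _ _ hconf)

end IsLinkSystem

lemma injective_of_forall_not_isConflict {ι : Type*} [Fintype ι] (hι : 2 < Fintype.card ι)
    {f : ι → α}
    (hf : ∀ i j l, i ≠ j → i ≠ l → j ≠ l → ¬ IsConflict G x B (f i) (f j) (f l)) :
    Function.Injective f := by
  classical
  intro i j hij
  by_contra hne
  obtain ⟨l, -, hl⟩ := Finset.exists_mem_notMem_of_card_lt_card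
    ((Finset.card_le_two (a := i) (b := j)).trans_lt hι)
  rw [Finset.mem_insert, Finset.mem_singleton, not_or] at hl
  exact hf i j l hne (Ne.symm hl.1) (Ne.symm hl.2) (hij ▸ .eq _ _)

namespace IsLinkSystem

lemma isLinkCycle (h : IsLinkSystem G ℓ x B) {s : ℕ} (hs : 2 < s) {f : ZMod s → α}
    (hf : ∀ i j l, i ≠ j → i ≠ l → j ≠ l → ¬ IsConflict G x B (f i) (f j) (f l)) :
    IsLinkCycle G s (fun t => x (f t)) fun t => B (f t, f (t + 1)) := by
  have : NeZero s := ⟨by omega⟩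
  have : Fact (1 < s) := ⟨by omega⟩
  have hfinj := injective_of_forall_not_isConflict ((ZMod.card s).symm ▸ hs) hf
  have hcast {t t' : ℕ} (ht : t < s) (ht' : t' < s) (h : (t : ZMod s) = t') : t = t' := by
    rwa [ZMod.natCast_eq_natCast_iff', Nat.mod_eq_of_lt ht, Nat.mod_eq_of_lt ht'] at h
  have hne_succ (i : ZMod s) : i ≠ i + 1 := by simp
  have hne_succ_succ (i : ZMod s) : i ≠ i + 1 + 1 := fun hi => by
    have h2 : ((2 : ℕ) : ZMod s) = (0 : ℕ) := by linear_combination -hi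
    exact two_ne_zero (hcast hs (by omega) h2)
  refine ⟨by simp, fun t ht t' ht' heq => hcast ht ht' (hfinj (h.injective heq)),
    fun _ _ => h.notMem _ _, fun {t t'} ht ht' hne => h.disjoint fun heq => ?_,
    fun {t} _ => ?_, fun _ _ => h.not_adj _ _, ?_, ?_⟩
  · exact hne (hcast ht ht' (hfinj (Prod.mk.inj heq).1))
  · simpa using h.links (f t) (f (t + 1))
  · intro t t' u v ht ht' hne hu hv huv
    have hne' : (t : ZMod s) ≠ t' := fun heq => hne (hcast ht ht' heq)
    by_cases hsucc : (t' : ZMod s) = t + 1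
    · rw [hsucc] at hv
      exact hf _ _ _ (hne_succ _) (hne_succ_succ _) (hne_succ _) (.right hu hv huv)
    · exact hf _ _ _ (hne_succ _) hne' (Ne.symm hsucc) (.left hu hv huv)
  · intro t t' v _ _ hv huv
    by_contra! hne
    refine hf t t' (t' + 1) (fun heq => hne.1 (by rw [heq])) (fun heq => hne.2 ?_) (hne_succ _)
      (.vertex hv huv)
    rw [heq, Nat.cast_succ]

theorem card_index_le [Fintype α] (hG : Degenerate G k) (hℓ : InducedCycleOrderLT G ℓ)
    (h : IsLinkSystem G ℓ x B) : Fintype.card α ≤ (ℓ + 3) ^ 3 * (8 * k * (ℓ + 1) + 1) := by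
  by_contra! hα
  obtain ⟨f, hf⟩ := h.exists_forall_not_isConflict hG (ι := ZMod (ℓ + 3)) (by rwa [ZMod.card])
  have := (h.isLinkCycle (by omega) hf).two_mul_lt (by omega) hℓ
  omega

end IsLinkSystem

end LinkSystems

section Bounds

variable {V : Type u} {G : SimpleGraph V} {k ℓ L n : ℕ}

theorem HasPathOfOrder.lt_pow_inseparableDepth (hdeg : Degenerate G k)
    (hℓ : InducedCycleOrderLT G ℓ) (hL : InducedPathOrderLE G L) (hpath : HasPathOfOrder G n)
    {m M : ℕ} (hm : (ℓ + 3) ^ 3 * (8 * k * (ℓ + 1) + 1) < m) (hmM : (k + 1) * m ≤ M)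
    (hM : m + m * m * (2 * k * L + 2) * L < M) :
    n < (M ^ (L * ((k + 1) * m) + 1)) ^ inseparableDepth L ((k + 1) * m) := by
  by_contra! hn
  obtain ⟨X, hXcard, hX⟩ := hpath.exists_isInseparable hL (Nat.zero_lt_of_lt hM) hmM hn
  obtain ⟨Y, hYX, rfl, hY⟩ := hdeg.exists_isIndepSet hXcard.ge
  have hYinsep : IsInseparable G M Y := fun x hx y hy => hX x (hYX hx) y (hYX hy)
  obtain ⟨B, hB⟩ := hYinsep.exists_isLinkSystem hdeg hℓ hL hY hM
  have hYcard := hB.card_index_le hdeg hℓ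
  rw [Fintype.card_coe] at hYcard
  exact hYcard.not_gt hm

lemma inseparableDepth_le (hL : 2 ≤ L) (j : ℕ) : inseparableDepth L j ≤ L ^ (2 * j) := by
  have hL1 : 0 < L := by omega
  induction j with
  | zero => rfl
  | succ j ih =>
    calc L * inseparableDepth L j + 1
        ≤ L * L ^ (2 * j) + L * L ^ (2 * j) :=
          Nat.add_le_add (Nat.mul_le_mul_left L ih) (Nat.mul_pos hL1 (Nat.pow_pos hL1))
      _ = 2 * (L * L ^ (2 * j)) := (two_mul _).symm
      _ ≤ L * (L * L ^ (2 * j)) := Nat.mul_le_mul_right _ hL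
      _ = L ^ (2 * (j + 1)) := by ring

lemma add_mul_lt_pow (hL : 2 ≤ L) (k m : ℕ) :
    m + m * m * (2 * k * L + 2) * L < L ^ (m + m * m * (2 * k + 2) + 2) := by
  have hL1 : 1 ≤ L := by omega
  calc m + m * m * (2 * k * L + 2) * L
      ≤ m * L ^ 2 + m * m * (2 * k * L + 2 * L) * L := by
        gcongr
        · exact Nat.le_mul_of_pos_right m (Nat.pow_pos hL1)
        · omega
    _ = (m + m * m * (2 * k + 2)) * L ^ 2 := by ring
    _ < L ^ (m + m * m * (2 * k + 2)) * L ^ 2 :=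
        Nat.mul_lt_mul_of_pos_right (Nat.lt_pow_self hL) (Nat.pow_pos hL1)
    _ = L ^ (m + m * m * (2 * k + 2) + 2) := (pow_add _ _ _).symm

lemma logb_two_le_of_le_pow {A : ℕ} (hn : n ≤ L ^ A) : Real.logb 2 n ≤ L * A := by
  rcases n.eq_zero_or_pos with rfl | hpos
  · rw [Nat.cast_zero, Real.logb_zero]
    positivity
  have h2 : n ≤ 2 ^ (L * A) := by
    rw [pow_mul]
    exact hn.trans (Nat.pow_le_pow_left Nat.lt_two_pow_self.le A)
  rw [Real.logb_le_iff_le_rpow one_lt_two (by exact_mod_cast hpos)]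
  exact_mod_cast h2

theorem exists_logb_two_le_pow (k ℓ : ℕ) : ∃ E, 2 ≤ E ∧
    ∀ {V : Type u} {G : SimpleGraph V} {L n : ℕ}, 2 ≤ L → Degenerate G k →
      InducedCycleOrderLT G ℓ → InducedPathOrderLE G L → HasPathOfOrder G n →
      Real.logb 2 n ≤ (L : ℝ) ^ E := by
  set m := (ℓ + 3) ^ 3 * (8 * k * (ℓ + 1) + 1) + 1
  set j := (k + 1) * m
  set e := j + m * m * (2 * k + 2) + 2
  refine ⟨1 + (e + (j + 2) + 2 * j), by omega, fun {V G L n} hL hdeg hℓ hpathL hpath => ?_⟩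
  have hL1 : 0 < L := by omega
  have hmj : m ≤ j := Nat.le_mul_of_pos_left m k.succ_pos
  have hjM : j ≤ L ^ e := (by omega : j ≤ e).trans (Nat.lt_pow_self hL).le
  have hM : m + m * m * (2 * k * L + 2) * L < L ^ e :=
    (add_mul_lt_pow hL k m).trans_le (Nat.pow_le_pow_right hL1 (by omega))
  have hn : n < ((L ^ e) ^ (L * j + 1)) ^ inseparableDepth L j :=
    hpath.lt_pow_inseparableDepth hdeg hℓ hpathL (Nat.lt_succ_self _) hjM hM
  rw [← pow_mul, ← pow_mul] at hn
  have hwidth : L * j + 1 ≤ L ^ (j + 2) :=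
    calc L * j + 1 ≤ L * (j + 1) := by rw [mul_add]; omega
      _ ≤ L * L ^ (j + 1) := Nat.mul_le_mul_left L (Nat.lt_pow_self hL).le
      _ = L ^ (j + 2) := by ring
  have hexp : L * (e * ((L * j + 1) * inseparableDepth L j)) ≤
      L ^ (1 + (e + (j + 2) + 2 * j)) := by
    rw [← mul_assoc e, pow_add, pow_add, pow_add, pow_one]
    gcongr
    · exact (Nat.lt_pow_self hL).le
    · exact inseparableDepth_le hL j
  exact (logb_two_le_of_le_pow hn.le).trans (by exact_mod_cast hexp)

end Bounds

section InducedPaths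

variable {V : Type u} {G : SimpleGraph V} {n : ℕ}

lemma HasPathOfOrder.exists_adj (h : HasPathOfOrder G n) (hn : 2 ≤ n) : ∃ a b, G.Adj a b := by
  obtain ⟨u, v, p, -, hp⟩ := h
  exact ⟨_, _, p.adj_getVert_succ (i := 0) (by omega)⟩

lemma exists_inducedPathOrderLE_of_not_hasInducedPathGE {r : ℝ} (h : ¬ HasInducedPathGE G r) :
    ∃ L : ℕ, L < r ∧ InducedPathOrderLE G L := by
  have hr : 0 < r := by
    by_contra! hr
    exact h ⟨0, by simpa using hr, ⟨RelEmbedding.ofIsEmpty _ _⟩⟩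
  refine ⟨⌈r⌉₊ - 1, Nat.lt_ceil.1 (by have := Nat.ceil_pos.2 hr; omega), fun m hm => ?_⟩
  by_contra! hlt
  exact h ⟨m, Nat.ceil_le.1 (by omega), hm⟩

end InducedPaths

theorem stmt4_general (k ℓ : ℕ) :
    ∃ d : ℝ, 0 < d ∧ d < 1 ∧
      ∀ {V : Type u} (G : SimpleGraph V) (n : ℕ),
        Degenerate G k →
        (∀ m : ℕ, 3 ≤ m → ℓ ≤ m → IsEmpty (ringGraph m ↪g G)) →
        HasPathOfOrder G n →
        HasInducedPathGE G (Real.logb 2 n ^ d) := by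
  obtain ⟨E, hE, hbound⟩ := exists_logb_two_le_pow.{u} k ℓ
  refine ⟨(E : ℝ)⁻¹, by positivity, inv_lt_one_of_one_lt₀ (by exact_mod_cast hE),
    fun {V} G n hdeg hring hpath => ?_⟩
  by_contra hno
  obtain ⟨L, hLr, hL⟩ := exists_inducedPathOrderLE_of_not_hasInducedPathGE hno
  have hn : 2 ≤ n := by
    by_contra! hlt
    have hlog : Real.logb 2 n = 0 := by interval_cases n <;> simp
    rw [hlog, Real.zero_rpow (by positivity)] at hLr
    exact L.cast_nonneg.not_gt hLr
  obtain ⟨a, b, hab⟩ := hpath.exists_adj hn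
  have hlog0 : 0 ≤ Real.logb 2 n :=
    Real.logb_nonneg one_lt_two (by exact_mod_cast one_le_two.trans hn)
  refine hLr.not_ge ?_
  calc Real.logb 2 n ^ (E : ℝ)⁻¹ ≤ ((L : ℝ) ^ E) ^ (E : ℝ)⁻¹ :=
        Real.rpow_le_rpow hlog0 (hbound (hL.two_le hab) hdeg hring hL hpath) (by positivity)
    _ = L := Real.pow_rpow_inv_natCast L.cast_nonneg (by omega)

theorem stmt4 (k ℓ : ℕ) (hk : 0 < k) (hℓ : 0 < ℓ) :
    ∃ d : ℝ, 0 < d ∧ d < 1 ∧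
      ∀ {V : Type} [Fintype V] (G : SimpleGraph V) (n : ℕ),
        Degenerate G k →
        (∀ m : ℕ, 3 ≤ m → ℓ ≤ m → IsEmpty (ringGraph m ↪g G)) →
        HasPathOfOrder G n →
        HasInducedPathGE G (Real.logb 2 n ^ d) := by
  obtain ⟨d, hd0, hd1, hd⟩ := stmt4_general k ℓ
  exact ⟨d, hd0, hd1, fun G n => hd G n⟩
end
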